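/- Let G be a finite graph and T ⊆ V(G). Then the maximal number of pairwise edge-disjoint T-paths equals the minimum, over all T-partitions 𝒜 = {X_t : t ∈ T}, of (1/2)·(Σ_{t∈T} d(X_t) − o(G,𝒜)), where o(G,𝒜) is the number of components Y of G − ⋃𝒜 with d(Y) odd. -/

import Mathlib

/-!
Common definitions: multigraphs (parallel edges allowed, no loops), walks,
paths, cuts, waves and related notions used in the statements below.
-/

universe u v

/-- A multigraph with vertex type `V` and edge type `E`: every edge is assigned
an unordered pair of *distinct* end-vertices (parallel edges allowed, no loops). -/
structure Multigraph (V : Type u) (E : Type v) : Type (max u v) where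
  inc : E → Sym2 V
  not_isDiag : ∀ e, ¬ (inc e).IsDiag

namespace Multigraph

variable {V : Type u} {E : Type v}

/-- Walks in a multigraph, recorded together with the edges they traverse. -/
inductive Walk (G : Multigraph V E) : V → V → Type (max u v)
  | nil (v : V) : Walk G v v
  | cons {u v w : V} (e : E) (he : G.inc e = s(u, v)) (p : Walk G v w) : Walk G u w

namespace Walk

variable {G : Multigraph V E}

/-- The list of vertices visited by a walk. -/
def support : ∀ {u w : V}, G.Walk u w → List V
  | _, _, .nil v => [v]
  | u, _, .cons _ _ p => u :: p.support

/-- The list of edges traversed by a walk. -/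
def edges : ∀ {u w : V}, G.Walk u w → List E
  | _, _, .nil _ => []
  | _, _, .cons e _ p => e :: p.edges

end Walk

/-- `δ_G(v)`: the set of edges incident with the vertex `v`. -/
def inci (G : Multigraph V E) (v : V) : Set E := {e | v ∈ G.inc e}

/-- `δ_G(X)`: the set of edges with exactly one end-vertex in `X`. -/
def cut (G : Multigraph V E) (X : Set V) : Set E :=
  {e | ∃ x y, G.inc e = s(x, y) ∧ x ∈ X ∧ y ∉ X}

/-- Connectedness of a multigraph. -/
def Connected (G : Multigraph V E) : Prop := ∀ u v : V, Nonempty (G.Walk u v)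

/-- A `T`-path: a path connecting two distinct vertices of `T`
with no internal vertex in `T`. -/
structure TPath (G : Multigraph V E) (T : Set V) : Type (max u v) where
  first : V
  last : V
  walk : G.Walk first last
  first_mem : first ∈ T
  last_mem : last ∈ T
  ne : first ≠ last
  support_nodup : walk.support.Nodup
  internal : ∀ x ∈ walk.support, x ∈ T → x = first ∨ x = last

/-- A system of pairwise edge-disjoint `T`-paths. -/
def TPathDisjoint (G : Multigraph V E) {T : Set V} (P : Set (G.TPath T)) : Prop :=
  ∀ p ∈ P, ∀ q ∈ P, p ≠ q → ∀ e, e ∈ p.walk.edges → e ∉ q.walk.edges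

/-- An `st`-path: a path from `s` to `t` (no internal vertex is `s` or `t`,
which is automatic as the vertices of a path are distinct). -/
structure STPath (G : Multigraph V E) (s t : V) : Type (max u v) where
  walk : G.Walk s t
  support_nodup : walk.support.Nodup

/-- A system of pairwise edge-disjoint `st`-paths. -/
def STPathDisjoint (G : Multigraph V E) {s t : V} (P : Set (G.STPath s t)) : Prop :=
  ∀ p ∈ P, ∀ q ∈ P, p ≠ q → ∀ e, e ∈ p.walk.edges → e ∉ q.walk.edges

/-- A nontrivial path starting at `s`. -/
structure SPath (G : Multigraph V E) (s : V) : Type (max u v) where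
  last : V
  walk : G.Walk s last
  support_nodup : walk.support.Nodup
  edges_ne_nil : walk.edges ≠ []

/-- A system of pairwise edge-disjoint paths starting at `s`. -/
def SPathDisjoint (G : Multigraph V E) {s : V} (W : Set (G.SPath s)) : Prop :=
  ∀ p ∈ W, ∀ q ∈ W, p ≠ q → ∀ e, e ∈ p.walk.edges → e ∉ q.walk.edges

/-- The set of last edges of a system of paths starting at `s`. -/
def lastEdges (G : Multigraph V E) {s : V} (W : Set (G.SPath s)) : Set E :=
  {e | ∃ p ∈ W, p.walk.edges.getLast? = some e}

/-- `C` is a cut separating `A` from `B`. -/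
def SepCut (G : Multigraph V E) (A B : Set V) (C : Set E) : Prop :=
  ∃ X : Set V, A ⊆ X ∧ (∀ b ∈ B, b ∉ X) ∧ C = G.cut X

/-- `C` is a `⊆`-minimal cut separating `A` from `B`. -/
def IsMinSepCut (G : Multigraph V E) (A B : Set V) (C : Set E) : Prop :=
  G.SepCut A B C ∧ ∀ D : Set E, G.SepCut A B D → D ⊆ C → D = C

/-- An `s`-`B`-wave: a system of pairwise edge-disjoint paths starting at `s`
whose set of last edges is a `⊆`-minimal cut separating `s` from `B`. -/
def IsWave (G : Multigraph V E) (s : V) (B : Set V) (W : Set (G.SPath s)) : Prop :=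
  G.SPathDisjoint W ∧ G.IsMinSepCut {s} B (G.lastEdges W)

/-- An Erdős–Menger `st`-cut: an `st`-cut which is orthogonal to some system of
pairwise edge-disjoint `st`-paths, i.e. it consists of exactly one edge chosen
from each path of the system. -/
def IsEMCut (G : Multigraph V E) (s t : V) (C : Set E) : Prop :=
  (∃ X : Set V, s ∈ X ∧ t ∉ X ∧ C = G.cut X) ∧
  ∃ P : Set (G.STPath s t), G.STPathDisjoint P ∧
    (∀ p ∈ P, ∃! e, e ∈ C ∧ e ∈ p.walk.edges) ∧
    (∀ e ∈ C, ∃ p ∈ P, e ∈ p.walk.edges)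

/-- The order `≼` on `st`-cuts: the `s`-side of `C` is contained in the
`s`-side of `D` (in a connected graph the `s`-side is unique). -/
def CutLE (G : Multigraph V E) (s t : V) (C D : Set E) : Prop :=
  ∃ X Y : Set V, s ∈ X ∧ t ∉ X ∧ C = G.cut X ∧ s ∈ Y ∧ t ∉ Y ∧ D = G.cut Y ∧ X ⊆ Y

/-- A cut of the form `C_W` for some `st`-wave `W`. -/
def IsWaveCut (G : Multigraph V E) (s t : V) (C : Set E) : Prop :=
  ∃ W : Set (G.SPath s), G.IsWave s {t} W ∧ G.lastEdges W = C

/-- Deletion of a set of edges. -/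
def deleteEdges (G : Multigraph V E) (F : Set E) : Multigraph V {e : E // e ∉ F} where
  inc e := G.inc e.1
  not_isDiag e := G.not_isDiag e.1

open Classical in
/-- Contraction of the vertex set `X` to the vertex `s` (edges inside `X` are
deleted, edges leaving `X` are redirected to `s`). -/
noncomputable def contract (G : Multigraph V E) (X : Set V) (s : V) :
    Multigraph V {e : E // ¬ (Sym2.map (fun v => if v ∈ X then s else v) (G.inc e)).IsDiag} where
  inc e := Sym2.map (fun v => if v ∈ X then s else v) (G.inc e.1)
  not_isDiag e := e.2

/-- Reachability inside a set `S` of vertices. -/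
def ReachableIn (G : Multigraph V E) (S : Set V) (x y : V) : Prop :=
  ∃ p : G.Walk x y, ∀ z ∈ p.support, z ∈ S

/-- `Y` is (the vertex set of) a connected component of the subgraph of `G`
induced by `S`. -/
def IsComponentOf (G : Multigraph V E) (Y S : Set V) : Prop :=
  Y.Nonempty ∧ Y ⊆ S ∧ ∀ x ∈ Y, ∀ y ∈ S, (G.ReachableIn S x y ↔ y ∈ Y)

/-- A cycle in a multigraph (a closed walk with distinct edges whose
vertices are distinct except that the first one equals the last one). -/
structure Cycle (G : Multigraph V E) : Type (max u v) where
  base : V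
  walk : G.Walk base base
  edges_ne_nil : walk.edges ≠ []
  edges_nodup : walk.edges.Nodup
  support_tail_nodup : walk.support.tail.Nodup

/-- A graph is Eulerian if its edge set can be partitioned into
edge sets of cycles. -/
def IsEulerian (G : Multigraph V E) : Prop :=
  ∃ C : Set G.Cycle,
    (∀ c ∈ C, ∀ d ∈ C, c ≠ d → ∀ e, e ∈ c.walk.edges → e ∉ d.walk.edges) ∧
    ∀ e : E, ∃ c ∈ C, e ∈ c.walk.edges

/-- A `T`-partition: a family `{A t : t ∈ T}` of pairwise disjoint vertex sets
with `A t ∩ T = {t}`. -/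
def IsTPartition (T : Set V) (A : V → Set V) : Prop :=
  (∀ t ∈ T, A t ∩ T = {t}) ∧
  ∀ t₁ ∈ T, ∀ t₂ ∈ T, t₁ ≠ t₂ → Disjoint (A t₁) (A t₂)

end Multigraph


namespace MaderAux
open Classical

/-- Number of consecutive pairs of a list which are not related by `PA`. -/
noncomputable def wt {E : Type} (PA : E → E → Prop) : List E → ℕ
  | [] => 0
  | [_] => 0
  | a :: b :: l => (if PA a b then 0 else 1) + wt PA (b :: l)

theorem wt_split {E : Type} (PA : E → E → Prop) (l₁ : List E) (x : E) (l₂ : List E) :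
    wt PA (l₁ ++ x :: l₂) = wt PA (l₁ ++ [x]) + wt PA (x :: l₂) := by
  induction l₁ with
  | nil => simp [wt]
  | cons a l ih =>
    cases l with
    | nil => simp [wt]
    | cons b l => simp only [List.cons_append, wt] at ih ⊢; omega

theorem wt_reverse {E : Type} (PA : E → E → Prop) (hs : ∀ x y, PA x y → PA y x) (l : List E) :
    wt PA l.reverse = wt PA l := by
  induction l with
  | nil => rfl
  | cons a l ih =>
    cases l with
    | nil => rfl
    | cons b l =>
      have : PA a b ↔ PA b a := ⟨hs _ _, hs _ _⟩
      simp only [List.reverse_cons, List.append_assoc, List.cons_append, List.nil_append] at ih ⊢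
      rw [wt_split, ih]
      simp [wt, this]; omega

theorem wt_eq_zero {E : Type} {PA : E → E → Prop} {l : List E} (h : wt PA l = 0) :
    l.IsChain PA := by
  induction l with
  | nil => simp
  | cons a l ih =>
    cases l with
    | nil => simp
    | cons b l =>
      simp only [wt] at h
      rw [List.isChain_cons_cons]
      refine ⟨?_, ih (by omega)⟩
      by_contra hn
      simp [hn] at h

theorem wt_zero_of_chain {E : Type} {PA : E → E → Prop} {l : List E} (h : l.IsChain PA) :
    wt PA l = 0 := by
  induction l with
  | nil => rfl
  | cons a l ih =>
    cases l with
    | nil => rfl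
    | cons b l =>
      rw [List.isChain_cons_cons] at h
      simp [wt, h.1, ih h.2]

theorem wt_prefix_le {E : Type} (PA : E → E → Prop) (l₁ l₂ : List E) :
    wt PA l₁ ≤ wt PA (l₁ ++ l₂) := by
  induction l₁ with
  | nil => simp [wt]
  | cons a l ih =>
    cases l with
    | nil => simp [wt]
    | cons b l => simp only [List.cons_append, wt] at ih ⊢; omega

theorem wt_suffix_le {E : Type} (PA : E → E → Prop) (l₁ l₂ : List E) :
    wt PA l₂ ≤ wt PA (l₁ ++ l₂) := by
  induction l₁ with
  | nil => simp
  | cons a l ih =>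
    refine ih.trans ?_
    cases h : l ++ l₂ with
    | nil => simp [wt]
    | cons b l => simp [wt, h]

theorem wt_infix_le {E : Type} (PA : E → E → Prop) {l₁ l₂ : List E} (h : l₁ <:+: l₂) :
    wt PA l₁ ≤ wt PA l₂ := by
  obtain ⟨s, t, rfl⟩ := h
  exact (wt_suffix_le PA s l₁).trans (wt_prefix_le PA _ _)

/-- A path between two elements of different colours. -/
structure IsP {E C : Type} (adj : E → E → Prop) (col : E → Option C) (l : List E) (a b : E) :
    Prop where
  nodup : l.Nodup
  chain : l.IsChain adj
  head : l.head? = some a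
  last : l.getLast? = some b
  ca : col a ≠ none
  cb : col b ≠ none
  ne : col a ≠ col b

/-- `k` pairwise disjoint paths joining elements of different colours. -/
structure IsPack {E C : Type} (adj : E → E → Prop) (col : E → Option C) {k : ℕ}
    (Q : Fin k → List E) (a b : Fin k → E) : Prop where
  isP : ∀ i, IsP adj col (Q i) (a i) (b i)
  disj : ∀ i j, i ≠ j → ∀ x ∈ Q i, x ∉ Q j

def Pack {E C : Type} (adj : E → E → Prop) (col : E → Option C) (k : ℕ) : Prop :=
  ∃ (Q : Fin k → List E) (a b : Fin k → E), IsPack adj col Q a b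

def Tight {E C : Type} (col : E → Option C) (l : List E) (a b : E) : Prop :=
  ∀ y ∈ l, col y ≠ none → y = a ∨ y = b

section
variable {E C : Type} {adj : E → E → Prop} {col : E → Option C} {l : List E} {a b : E}

theorem IsP.a_mem (h : IsP adj col l a b) : a ∈ l := List.mem_of_mem_head? h.head
theorem IsP.b_mem (h : IsP adj col l a b) : b ∈ l := List.mem_of_mem_getLast? h.last

theorem IsP.reverse (hs : ∀ x y, adj x y → adj y x) (h : IsP adj col l a b) :
    IsP adj col l.reverse b a where
  nodup := List.nodup_reverse.2 h.nodup
  chain := by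
    rw [List.isChain_reverse]
    exact h.chain.imp fun x y => hs x y
  head := by rw [List.head?_reverse, h.last]
  last := by rw [List.getLast?_reverse, h.head]
  ca := h.cb
  cb := h.ca
  ne := h.ne.symm

theorem IsP.tighten (h : IsP adj col l a b) :
    ∃ l' a' b', IsP adj col l' a' b' ∧ Tight col l' a' b' ∧ l' <:+: l := by
  induction hn : l.length using Nat.strong_induction_on generalizing l a b with
  | _ n ih =>
  by_cases ht : Tight col l a b
  · exact ⟨l, a, b, h, ht, List.infix_rfl⟩
  · unfold Tight at ht
    push Not at ht
    obtain ⟨y, hy, hcy, hya, hyb⟩ := ht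
    obtain ⟨l1, l2, rfl⟩ := List.append_of_mem hy
    have hl1 : l1 ≠ [] := by
      rintro rfl
      have := h.head; simp at this; exact hya this
    have hl2 : l2 ≠ [] := by
      rintro rfl
      have := h.last; simp at this; exact hyb this
    have hch := List.isChain_split.1 h.chain
    by_cases hc : col a = col y
    · have hP : IsP adj col (y :: l2) y b := by
        refine ⟨h.nodup.sublist (List.sublist_append_right _ _), hch.2, rfl, ?_, hcy, h.cb, ?_⟩
        · have := h.last
          rw [List.getLast?_append] at this
          rw [← this]; simp [List.getLast?_cons]
        · rw [← hc]; exact h.ne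
      have hlt : (y :: l2).length < n := by
        have := List.length_pos_iff.2 hl1
        simp at hn ⊢; omega
      obtain ⟨l', a', b', h1, h2, h3⟩ := ih _ hlt hP rfl
      exact ⟨l', a', b', h1, h2, h3.trans ⟨l1, [], by simp⟩⟩
    · have hP : IsP adj col (l1 ++ [y]) a y := by
        refine ⟨?_, hch.1, ?_, by simp, h.ca, hcy, hc⟩
        · have := h.nodup
          rw [← List.singleton_append, ← List.append_assoc] at this
          exact this.sublist (List.sublist_append_left _ _)
        · have := h.head
          rw [List.head?_append] at this
          rw [← this]; cases l1 <;> simp_all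
      have hlt : (l1 ++ [y]).length < n := by
        have := List.length_pos_iff.2 hl2
        simp at hn ⊢; omega
      obtain ⟨l', a', b', h1, h2, h3⟩ := ih _ hlt hP rfl
      exact ⟨l', a', b', h1, h2, h3.trans ⟨[], l2, by simp⟩⟩

theorem IsPack.tighten {k : ℕ} {Q : Fin k → List E} {a b : Fin k → E} (h : IsPack adj col Q a b) :
    ∃ (Q' : Fin k → List E) (a' b' : Fin k → E), IsPack adj col Q' a' b' ∧
      (∀ i, Tight col (Q' i) (a' i) (b' i)) ∧ ∀ i, Q' i <:+: Q i := by
  choose Q' a' b' h1 h2 h3 using fun i => (h.isP i).tighten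
  exact ⟨Q', a', b', ⟨h1, fun i j hij x hx hx' =>
    h.disj i j hij x ((h3 i).subset hx) ((h3 j).subset hx')⟩, h2, h3⟩

/-- A chain of `PA`-edges which starts on `R` follows `R`. -/
theorem prefix_of_chain {PA : E → E → Prop} {R : List E}
    (hR : ∀ p1 x p2, R = p1 ++ x :: p2 → ∀ y, PA x y → p1.getLast? = some y ∨ p2.head? = some y)
    (l2 : List E) : ∀ p1 x p2, R = p1 ++ x :: p2 → (x :: l2).IsChain PA → (x :: l2).Nodup →
      (∀ y ∈ l2, y ∉ p1) → l2 <+: p2 := by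
  induction l2 with
  | nil => simp
  | cons y l2 ih =>
    intro p1 x p2 hRe hc hn hd
    rw [List.isChain_cons_cons] at hc
    rcases hR p1 x p2 hRe y hc.1 with h | h
    · exact absurd (List.mem_of_mem_getLast? h) (hd y (by simp))
    · cases p2 with
      | nil => simp at h
      | cons z p2 =>
        simp at h
        subst h
        rw [List.cons_prefix_cons]
        refine ⟨rfl, ih (p1 ++ [x]) z p2 (by simp [hRe]) hc.2 hn.of_cons ?_⟩
        intro w hw hw'
        rw [List.mem_append] at hw'
        rcases hw' with hw' | hw'
        · exact hd w (by simp [hw]) hw'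
        · simp at hw'; subst hw'
          simp at hn
          exact hn.1.2 hw

/-- Rerouting a single path, oriented version. -/
theorem reroute_aux {PA : E → E → Prop} (hs : ∀ x y, adj x y → adj y x)
    (hPs : ∀ x y, PA x y → PA y x)
    (hl : IsP adj col l a b) (ht : Tight col l a b)
    {p1 p2 : List E} {x r z u : E} (hRn : (p1 ++ x :: p2).Nodup)
    (hRc : (p1 ++ x :: p2).IsChain adj) (hRP : (p1 ++ x :: p2).IsChain PA)
    (hRN : ∀ q1 y q2, p1 ++ x :: p2 = q1 ++ y :: q2 → ∀ w, PA y w →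
      q1.getLast? = some w ∨ q2.head? = some w)
    (hr : p1.head? = some r) (hz : (x :: p2).getLast? = some z)
    (hx : x ∈ l) (hd : ∀ y ∈ p1, y ∉ l) (hcr : col r ≠ none) (hru : r ≠ u)
    (h1 : ∀ y ∈ x :: p2, col y ≠ none → y = z ∨ y = u)
    (h2 : (col z ≠ none ∧ col r ≠ col z) ∨ (u ∈ x :: p2 ∧ col u = col r))
    (hrb : col r ≠ col b) :
    ∃ l' a' b', IsP adj col l' a' b' ∧ (∀ y ∈ l', y ∈ l ∨ y ∈ p1) ∧
      (wt PA l' < wt PA l ∨ ((u = a ∨ u = b) ∧ u ≠ a' ∧ u ≠ b')) := by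
  obtain ⟨l1, l2, rfl⟩ := List.append_of_mem hx
  have hRc' := List.isChain_split.1 hRc
  have hlc := List.isChain_split.1 hl.chain
  have hln := hl.nodup
  have hb2 : (x :: l2).getLast? = some b := by
    have := hl.last
    rw [List.getLast?_append] at this
    rw [← this]; simp [List.getLast?_cons]
  have ha2 : (x :: l1.reverse).getLast? = some a := by
    have := hl.head
    rw [← this]
    cases l1 <;> simp [List.getLast?_cons]
  have hbm : b ∈ x :: l2 := List.mem_of_mem_getLast? hb2
  have ham : a ∈ x :: l1.reverse := List.mem_of_mem_getLast? ha2
  have hhd : ∀ m : List E, (p1 ++ m).head? = some r := by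
    intro m; rw [List.head?_append, hr]; rfl
  have hP0 : wt PA (p1 ++ [x]) = 0 := by
    apply wt_zero_of_chain
    exact (List.isChain_split.1 hRP).1
  -- the two candidates
  have N1 : IsP adj col (p1 ++ x :: l2) r b := by
    refine ⟨?_, List.isChain_split.2 ⟨hRc'.1, hlc.2⟩, hhd _, ?_, hcr, hl.cb, hrb⟩
    · rw [List.nodup_append] at hRn hln ⊢
      refine ⟨hRn.1, hln.2.1, ?_⟩
      rintro y hy w hw rfl
      exact hd y hy (by simp at hw ⊢; tauto)
    · rw [List.getLast?_append, hb2]; rfl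
  have W1 : wt PA (p1 ++ x :: l2) = wt PA (x :: l2) := by rw [wt_split, hP0, zero_add]
  have hrev : wt PA (l1 ++ [x]) = wt PA (x :: l1.reverse) := by
    rw [← wt_reverse PA hPs]; simp
  have W2 : wt PA (p1 ++ x :: l1.reverse) = wt PA (l1 ++ [x]) := by
    rw [wt_split, hP0, zero_add, hrev]
  have Wl := wt_split PA l1 x l2
  have hrn : r ∉ l1 ++ x :: l2 := hd r (List.mem_of_mem_head? hr)
  have hxr : (x :: l1.reverse).Nodup := by
    have := hln
    rw [← List.nodup_reverse] at this
    simp at this ⊢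
    rw [List.nodup_append] at this
    have h := this.2.1
    simp at h
    exact h
  have N2 : col r ≠ col a → IsP adj col (p1 ++ x :: l1.reverse) r a := by
    intro hra
    refine ⟨?_, List.isChain_split.2 ⟨hRc'.1, ?_⟩, hhd _, ?_, hcr, hl.ca, hra⟩
    · rw [List.nodup_append] at hRn ⊢
      refine ⟨hRn.1, hxr, ?_⟩
      rintro y hy w hw rfl
      exact hd y hy (by simp at hw ⊢; tauto)
    · have : (x :: l1.reverse) = (l1 ++ [x]).reverse := by simp
      rw [this, List.isChain_reverse]
      exact hlc.1.imp fun x y => hs x y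
    · rw [List.getLast?_append, ha2]; rfl
  have S1 : ∀ y ∈ p1 ++ x :: l2, y ∈ l1 ++ x :: l2 ∨ y ∈ p1 := by
    intro y hy; simp at hy ⊢; tauto
  have S2 : ∀ y ∈ p1 ++ x :: l1.reverse, y ∈ l1 ++ x :: l2 ∨ y ∈ p1 := by
    intro y hy; simp at hy ⊢; tauto
  have hab : a ≠ b := fun h => hl.ne (by rw [h])
  by_cases hw : wt PA (l1 ++ [x]) = 0
  swap
  · exact ⟨_, _, _, N1, S1, Or.inl (by omega)⟩
  by_cases hau : a = u
  · exact ⟨_, _, _, N1, S1, Or.inr ⟨Or.inl hau.symm, hru.symm, by rw [← hau]; exact hab⟩⟩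
  have hpre : l1.reverse <+: p2 := by
    apply prefix_of_chain hRN _ p1 x p2 rfl (wt_eq_zero (hrev ▸ hw)) hxr
    intro y hy hy'
    exact hd y hy' (by simp at hy ⊢; tauto)
  have haR : a ∈ x :: p2 := by
    have : x :: l1.reverse <+: x :: p2 := by rw [List.cons_prefix_cons]; exact ⟨rfl, hpre⟩
    exact this.subset ham
  have haz : a = z := (h1 a haR hl.ca).resolve_right hau
  have heq : l1.reverse = p2 := by
    obtain ⟨q, hq⟩ := hpre
    cases hq' : q with
    | nil => rw [hq', List.append_nil] at hq; exact hq
    | cons q0 q1 =>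
      exfalso
      have hn : (x :: p2).Nodup := hRn.sublist (List.sublist_append_right _ _)
      have e : x :: p2 = (x :: l1.reverse) ++ q := by simp [← hq]
      rw [e, List.nodup_append] at hn
      rw [e, List.getLast?_append, hq'] at hz
      have : z ∈ q := by
        rw [hq']
        apply List.mem_of_mem_getLast?
        simpa [List.getLast?_cons] using hz
      exact hn.2.2 a ham z this haz
  rcases h2 with h2 | ⟨hu, hcu⟩
  · have N2' := N2 (by rw [haz]; exact h2.2)
    by_cases hw2 : wt PA (x :: l2) = 0
    swap
    · exact ⟨_, _, _, N2', S2, Or.inl (by omega)⟩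
    have hpre2 : l2 <+: p2 := by
      apply prefix_of_chain hRN _ p1 x p2 rfl (wt_eq_zero hw2)
        (hln.sublist (List.sublist_append_right _ _))
      intro y hy hy'
      exact hd y hy' (by simp at hy ⊢; tauto)
    have hl2 : l2 = [] := by
      rw [List.eq_nil_iff_forall_not_mem]
      intro y hy
      have h' := hpre2.subset hy
      rw [← heq] at h'
      rw [List.nodup_append] at hln
      exact hln.2.2 y (by simpa using h') y (by simp [hy]) rfl
    have hbx : b = x := by rw [hl2] at hbm; simpa using hbm
    have hbu : b = u := by
      rcases h1 b (by simp [hbx]) hl.cb with h | h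
      · exact absurd (haz.trans h.symm) hab
      · exact h
    exact ⟨_, _, _, N2', S2, Or.inr ⟨Or.inr hbu.symm, hru.symm, fun h => hau h.symm⟩⟩
  · exfalso
    have hul : u ∈ l1 ++ x :: l2 := by rw [← heq] at hu; simp at hu ⊢; tauto
    rcases ht u hul (by rw [hcu]; exact hcr) with h | h
    · exact hau h.symm
    · exact hrb (by rw [← h, hcu])

theorem Tight.reverse (h : Tight col l a b) : Tight col l.reverse b a := by
  intro y hy hc
  exact (h y (by simpa using hy) hc).symm

/-- Rerouting a single path. -/
theorem reroute {PA : E → E → Prop} (hs : ∀ x y, adj x y → adj y x)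
    (hPs : ∀ x y, PA x y → PA y x)
    (hl : IsP adj col l a b) (ht : Tight col l a b)
    {p1 p2 : List E} {x r z u : E} (hRn : (p1 ++ x :: p2).Nodup)
    (hRc : (p1 ++ x :: p2).IsChain adj) (hRP : (p1 ++ x :: p2).IsChain PA)
    (hRN : ∀ q1 y q2, p1 ++ x :: p2 = q1 ++ y :: q2 → ∀ w, PA y w →
      q1.getLast? = some w ∨ q2.head? = some w)
    (hr : p1.head? = some r) (hz : (x :: p2).getLast? = some z)
    (hx : x ∈ l) (hd : ∀ y ∈ p1, y ∉ l) (hcr : col r ≠ none) (hru : r ≠ u)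
    (h1 : ∀ y ∈ x :: p2, col y ≠ none → y = z ∨ y = u)
    (h2 : (col z ≠ none ∧ col r ≠ col z) ∨ (u ∈ x :: p2 ∧ col u = col r)) :
    ∃ l' a' b', IsP adj col l' a' b' ∧ (∀ y ∈ l', y ∈ l ∨ y ∈ p1) ∧
      (wt PA l' < wt PA l ∨ ((u = a ∨ u = b) ∧ u ≠ a' ∧ u ≠ b')) := by
  by_cases hrb : col r ≠ col b
  · exact reroute_aux hs hPs hl ht hRn hRc hRP hRN hr hz hx hd hcr hru h1 h2 hrb
  · push Not at hrb
    have := reroute_aux (PA := PA) hs hPs (hl.reverse hs) ht.reverse hRn hRc hRP hRN hr hz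
      (by simpa using hx) (by simpa using hd) hcr hru h1 h2 (by rw [hrb]; exact hl.ne.symm)
    simpa [wt_reverse PA hPs, or_comm (a := u = b)] using this

end

end MaderAux


namespace MaderAux
open Classical

/-- `x`, `y` are consecutive on one of the lists `P i`. -/
def PAof {E : Type} {k : ℕ} (P : Fin k → List E) (x y : E) : Prop :=
  ∃ i, [x, y] <:+: P i ∨ [y, x] <:+: P i

theorem split_unique {E : Type} {y : E} : ∀ {s t q1 q2 : List E}, (s ++ y :: t).Nodup →
    s ++ y :: t = q1 ++ y :: q2 → s = q1 ∧ t = q2 := by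
  intro s
  induction s with
  | nil =>
    intro t q1 q2 hn h
    cases q1 with
    | nil => simpa using h
    | cons w q1 =>
      exfalso
      simp at h hn
      obtain ⟨rfl, h⟩ := h
      exact hn.1 (by simp [h])
  | cons w s ih =>
    intro t q1 q2 hn h
    cases q1 with
    | nil =>
      exfalso
      simp at h hn
      exact hn.1.2.1 h.1
    | cons w' q1 =>
      simp at h
      obtain ⟨rfl, h⟩ := h
      have hn' : (s ++ y :: t).Nodup := by
        rw [List.cons_append] at hn; exact hn.of_cons
      obtain ⟨rfl, rfl⟩ := ih hn' h
      exact ⟨rfl, rfl⟩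

theorem chain_infix {E : Type} (L : List E) : L.IsChain (fun x y => [x, y] <:+: L) := by
  induction L with
  | nil => simp
  | cons a l ih =>
    cases l with
    | nil => simp
    | cons b l =>
      rw [List.isChain_cons_cons]
      refine ⟨⟨[], l, by simp⟩, ih.imp ?_⟩
      intro x y h
      exact h.trans ⟨[a], [], by simp⟩

theorem hit_split {E : Type} (S : E → Prop) (R : List E) :
    (∀ y ∈ R, ¬ S y) ∨ ∃ p1 x p2, R = p1 ++ x :: p2 ∧ S x ∧ ∀ y ∈ p1, ¬ S y := by
  induction R with
  | nil => simp
  | cons a R ih =>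
    by_cases ha : S a
    · exact Or.inr ⟨[], a, R, rfl, ha, by simp⟩
    · rcases ih with h | ⟨p1, x, p2, rfl, hx, hp⟩
      · left; simp only [List.mem_cons, forall_eq_or_imp]; exact ⟨ha, h⟩
      · right
        refine ⟨a :: p1, x, p2, rfl, hx, ?_⟩
        simp only [List.mem_cons, forall_eq_or_imp]; exact ⟨ha, hp⟩

theorem ends_injective {E : Type} {k : ℕ} {Q : Fin k → List E} {a b : Fin k → E}
    (disj : ∀ i j, i ≠ j → ∀ x ∈ Q i, x ∉ Q j) (ha : ∀ i, a i ∈ Q i) (hb : ∀ i, b i ∈ Q i)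
    (hab : ∀ i, a i ≠ b i) : Function.Injective (Sum.elim a b) := by
  rintro (i | i) (j | j) h <;> simp only [Sum.elim_inl, Sum.elim_inr] at h
  · by_contra hne
    exact disj i j (fun h => hne (by rw [h])) _ (ha i) (h ▸ ha j)
  · by_cases hij : i = j
    · subst hij; exact absurd h (hab i)
    · exact absurd (h ▸ hb j) (disj i j hij _ (ha i))
  · by_cases hij : i = j
    · subst hij; exact absurd h.symm (hab i)
    · exact absurd (h ▸ ha j) (disj i j hij _ (hb i))
  · by_contra hne
    exact disj i j (fun h => hne (by rw [h])) _ (hb i) (h ▸ hb j)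

/-- A family of disjoint paths all of which but one join different colours. -/
structure BadPack {E C : Type} (adj : E → E → Prop) (col : E → Option C) (c : C) {k : ℕ}
    (P : Fin k → List E) (pa pb : Fin k → E) (i0 : Fin k) : Prop where
  nodup : ∀ i, (P i).Nodup
  chain : ∀ i, (P i).IsChain adj
  head : ∀ i, (P i).head? = some (pa i)
  last : ∀ i, (P i).getLast? = some (pb i)
  disj : ∀ i j, i ≠ j → ∀ x ∈ P i, x ∉ P j
  ca : ∀ i, col (pa i) ≠ none
  cb : ∀ i, col (pb i) ≠ none
  ne : ∀ i, pa i ≠ pb i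
  tight : ∀ i, Tight col (P i) (pa i) (pb i)
  valid : ∀ i, i ≠ i0 → col (pa i) ≠ col (pb i)
  c0 : col (pa i0) = some c
  c1 : col (pb i0) = some c

section
variable {E C : Type} {adj : E → E → Prop} {col : E → Option C}

theorem BadPack.orient (hs : ∀ x y, adj x y → adj y x) {c : C} {k : ℕ}
    {P : Fin k → List E} {pa pb : Fin k → E} {i0 : Fin k} (h : BadPack adj col c P pa pb i0)
    {r : E} {i : Fin k} (hr : r = pa i ∨ r = pb i) :
    ∃ R z, R.Nodup ∧ R.IsChain adj ∧ R.IsChain (PAof P) ∧ R.head? = some r ∧ R.getLast? = some z ∧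
      (∀ q1 y q2, R = q1 ++ y :: q2 → ∀ w, PAof P y w →
        q1.getLast? = some w ∨ q2.head? = some w) ∧ (∀ y, y ∈ R ↔ y ∈ P i) ∧
      (∀ y ∈ R, col y ≠ none → y = r ∨ y = z) ∧ col r ≠ none ∧ col z ≠ none ∧
      (i ≠ i0 → col r ≠ col z) ∧ (i = i0 → col r = some c) := by
  have key : ∀ q1 y q2, P i = q1 ++ y :: q2 → ∀ w, PAof P y w →
        q1.getLast? = some w ∨ q2.head? = some w := by
    intro q1 y q2 he w hw
    obtain ⟨j, hj⟩ := hw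
    have hyi : y ∈ P i := by rw [he]; simp
    have hyj : y ∈ P j := by rcases hj with hj | hj <;> exact hj.subset (by simp)
    have hij : i = j := by
      by_contra hne
      exact h.disj i j hne y hyi hyj
    subst hij
    have hn := h.nodup i
    rcases hj with ⟨s, t, hj⟩ | ⟨s, t, hj⟩
    · right
      have hj' : s ++ y :: (w :: t) = P i := by rw [← hj]; simp
      rw [← hj'] at hn he
      obtain ⟨rfl, rfl⟩ := split_unique hn he
      rfl
    · left
      have hj' : (s ++ [w]) ++ y :: t = P i := by rw [← hj]; simp
      rw [← hj'] at hn he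
      obtain ⟨rfl, rfl⟩ := split_unique hn he
      simp
  have hch : (P i).IsChain (PAof P) := (chain_infix (P i)).imp fun x y hxy => ⟨i, Or.inl hxy⟩
  rcases hr with rfl | rfl
  · refine ⟨P i, pb i, h.nodup i, h.chain i, hch, h.head i, h.last i, key, fun y => Iff.rfl,
      h.tight i, h.ca i, h.cb i, h.valid i, ?_⟩
    rintro rfl; exact h.c0
  · refine ⟨(P i).reverse, pa i, List.nodup_reverse.2 (h.nodup i), ?_, ?_, ?_, ?_, ?_, ?_,
      ?_, h.cb i, h.ca i, fun hi => (h.valid i hi).symm, ?_⟩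
    · rw [List.isChain_reverse]; exact (h.chain i).imp fun x y => hs x y
    · rw [List.isChain_reverse]
      exact hch.imp fun x y ⟨j, hj⟩ => ⟨j, hj.symm⟩
    · rw [List.head?_reverse, h.last]
    · rw [List.getLast?_reverse, h.head]
    · intro q1 y q2 he w hw
      have he' : P i = q2.reverse ++ y :: q1.reverse := by
        rw [← List.reverse_reverse (P i), he]; simp
      have := key _ _ _ he' w hw
      rw [List.getLast?_reverse, List.head?_reverse] at this
      exact this.symm
    · simp
    · intro y hy hc
      exact (h.tight i y (by simpa using hy) hc).symm
    · rintro rfl; exact h.c1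

/-- Rerouting in a packing. -/
theorem reroute_pack {PA : E → E → Prop} (hs : ∀ x y, adj x y → adj y x)
    (hPs : ∀ x y, PA x y → PA y x) {k : ℕ} {Q : Fin k → List E} {a b : Fin k → E}
    (hQ : IsPack adj col Q a b) (ht : ∀ i, Tight col (Q i) (a i) (b i))
    {p1 p2 : List E} {x r z u : E} (hRn : (p1 ++ x :: p2).Nodup)
    (hRc : (p1 ++ x :: p2).IsChain adj) (hRP : (p1 ++ x :: p2).IsChain PA)
    (hRN : ∀ q1 y q2, p1 ++ x :: p2 = q1 ++ y :: q2 → ∀ w, PA y w →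
      q1.getLast? = some w ∨ q2.head? = some w)
    (hr : p1.head? = some r) (hz : (x :: p2).getLast? = some z)
    (hx : ∃ i, x ∈ Q i) (hd : ∀ y ∈ p1, ¬ ∃ i, y ∈ Q i) (hcr : col r ≠ none) (hru : r ≠ u)
    (h1 : ∀ y ∈ x :: p2, col y ≠ none → y = z ∨ y = u)
    (h2 : (col z ≠ none ∧ col r ≠ col z) ∨ (u ∈ x :: p2 ∧ col u = col r)) :
    ∃ (Q' : Fin k → List E) (a' b' : Fin k → E), IsPack adj col Q' a' b' ∧
      (∀ i, ∀ y ∈ Q' i, (∃ j, y ∈ Q j) ∨ y ∈ p1) ∧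
      (∑ i, wt PA (Q' i) < ∑ i, wt PA (Q i) ∨
        ((∃ j, u = a j ∨ u = b j) ∧ ∀ i, a' i ≠ u ∧ b' i ≠ u)) := by
  obtain ⟨j, hj⟩ := hx
  obtain ⟨l', a', b', hP, hsub, hor⟩ := reroute (PA := PA) hs hPs (hQ.isP j) (ht j) hRn hRc hRP hRN
    hr hz hj (fun y hy hy' => hd y hy ⟨j, hy'⟩) hcr hru h1 h2
  refine ⟨Function.update Q j l', Function.update a j a', Function.update b j b', ⟨?_, ?_⟩, ?_, ?_⟩
  · intro i
    by_cases hij : i = j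
    · subst hij; simpa using hP
    · simpa [hij] using hQ.isP i
  · intro i i' hii y hy hy'
    by_cases hij : i = j
    · subst hij
      rw [Function.update_self] at hy
      rw [Function.update_of_ne hii.symm] at hy'
      rcases hsub y hy with h | h
      · exact hQ.disj _ _ hii y h hy'
      · exact hd y h ⟨_, hy'⟩
    · rw [Function.update_of_ne hij] at hy
      by_cases hij' : i' = j
      · subst hij'
        rw [Function.update_self] at hy'
        rcases hsub y hy' with h | h
        · exact hQ.disj _ _ hii y hy h
        · exact hd y h ⟨_, hy⟩
      · rw [Function.update_of_ne hij'] at hy'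
        exact hQ.disj _ _ hii y hy hy'
  · intro i y hy
    by_cases hij : i = j
    · subst hij
      rw [Function.update_self] at hy
      exact (hsub y hy).imp (fun h => ⟨_, h⟩) id
    · rw [Function.update_of_ne hij] at hy
      exact Or.inl ⟨i, hy⟩
  · rcases hor with h | ⟨h, h'⟩
    · left
      apply Finset.sum_lt_sum
      · intro i _
        by_cases hij : i = j
        · subst hij; simpa using h.le
        · simp [hij]
      · exact ⟨j, Finset.mem_univ _, by simpa using h⟩
    · right
      refine ⟨⟨j, h⟩, fun i => ?_⟩
      by_cases hij : i = j
      · subst hij; simpa using ⟨h'.1.symm, h'.2.symm⟩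
      · rw [Function.update_of_ne hij, Function.update_of_ne hij]
        have huj : u ∈ Q j := by
          rcases h with h | h
          · rw [h]; exact (hQ.isP j).a_mem
          · rw [h]; exact (hQ.isP j).b_mem
        constructor
        · intro he; exact hQ.disj i j hij _ (hQ.isP i).a_mem (he ▸ huj)
        · intro he; exact hQ.disj i j hij _ (hQ.isP i).b_mem (he ▸ huj)

/-- Choose a tight packing with minimal weight subject to a subset-closed condition. -/
theorem exists_min {PA : E → E → Prop} {k : ℕ} (A : E → Prop)
    (h : ∃ (Q : Fin k → List E) (a b : Fin k → E), IsPack adj col Q a b ∧ ∀ i, ∀ y ∈ Q i, A y) :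
    ∃ (Q : Fin k → List E) (a b : Fin k → E), IsPack adj col Q a b ∧
      (∀ i, Tight col (Q i) (a i) (b i)) ∧ (∀ i, ∀ y ∈ Q i, A y) ∧
      ∀ (Q' : Fin k → List E) (a' b' : Fin k → E), IsPack adj col Q' a' b' →
        (∀ i, ∀ y ∈ Q' i, A y) → ∑ i, wt PA (Q i) ≤ ∑ i, wt PA (Q' i) := by
  have hex : ∃ n, ∃ (Q : Fin k → List E) (a b : Fin k → E), IsPack adj col Q a b ∧
      (∀ i, ∀ y ∈ Q i, A y) ∧ ∑ i, wt PA (Q i) = n := by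
    obtain ⟨Q, a, b, h1, h2⟩ := h
    exact ⟨_, Q, a, b, h1, h2, rfl⟩
  obtain ⟨Q, a, b, h1, h2, h3⟩ := Nat.find_spec hex
  obtain ⟨Q', a', b', k1, k2, k3⟩ := h1.tighten
  refine ⟨Q', a', b', k1, k2, fun i y hy => h2 i y ((k3 i).subset hy), ?_⟩
  intro Q'' a'' b'' m1 m2
  have := Nat.find_min' hex ⟨Q'', a'', b'', m1, m2, rfl⟩
  have hle : ∑ i, wt PA (Q' i) ≤ ∑ i, wt PA (Q i) :=
    Finset.sum_le_sum fun i _ => wt_infix_le PA (k3 i)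
  omega

theorem IsPack.replace {k : ℕ} {Q : Fin k → List E} {a b : Fin k → E} (hQ : IsPack adj col Q a b)
    {κ : E → Option C} {j : Fin k} {l : List E} {a' b' : E} (hl : IsP adj κ l a' b')
    (hκ : ∀ i, i ≠ j → κ (a i) = col (a i) ∧ κ (b i) = col (b i))
    (hd : ∀ y ∈ l, ∀ i, i ≠ j → y ∉ Q i) : Pack adj κ k := by
  refine ⟨Function.update Q j l, Function.update a j a', Function.update b j b', ⟨?_, ?_⟩⟩
  · intro i
    by_cases hij : i = j
    · subst hij; simpa using hl
    · have h := hQ.isP i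
      have h' := hκ i hij
      simp only [Function.update_of_ne hij]
      exact ⟨h.nodup, h.chain, h.head, h.last, h'.1 ▸ h.ca, h'.2 ▸ h.cb, by
        rw [h'.1, h'.2]; exact h.ne⟩
  · intro i i' hii y hy hy'
    by_cases hij : i = j
    · subst hij
      rw [Function.update_self] at hy
      rw [Function.update_of_ne hii.symm] at hy'
      exact hd y hy _ hii.symm hy'
    · rw [Function.update_of_ne hij] at hy
      by_cases hij' : i' = j
      · subst hij'
        rw [Function.update_self] at hy'
        exact hd y hy' _ hij hy
      · rw [Function.update_of_ne hij'] at hy'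
        exact hQ.disj _ _ hii y hy hy'

theorem IsP.a_ne_b {l : List E} {a b : E} (h : IsP adj col l a b) : a ≠ b :=
  fun e => h.ne (by rw [e])

set_option maxHeartbeats 2000000 in
theorem stepA (hs : ∀ x y, adj x y → adj y x) {c : C} {k : ℕ}
    {P : Fin k → List E} {pa pb : Fin k → E} {i0 : Fin k} (hP : BadPack adj col c P pa pb i0)
    {u : E} (hu : col u = none) (hu2 : u ∈ P i0 ∨ (adj (pa i0) u ∧ adj (pb i0) u))
    (hQ : Pack adj (Function.update col u (some c)) k) : Pack adj col k := by
  set κ := Function.update col u (some c) with hκdef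
  have hκu : κ u = some c := by simp [hκdef]
  have hκ : ∀ y, y ≠ u → κ y = col y := fun y hy => by simp [hκdef, hy]
  have hκc : ∀ y, col y ≠ none → κ y = col y := fun y hy => hκ y (by rintro rfl; exact hy hu)
  have hPs : ∀ x y, PAof P x y → PAof P y x := fun x y ⟨i, hi⟩ => ⟨i, hi.symm⟩
  obtain ⟨Q0, a0, b0, hQ0⟩ := hQ
  obtain ⟨Q, a, b, hQ, hQt, -, hmin⟩ := exists_min (PA := PAof P) (fun _ => True)
    ⟨Q0, a0, b0, hQ0, fun _ _ _ => trivial⟩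
  have fin : ∀ (Q : Fin k → List E) (a b : Fin k → E), IsPack adj κ Q a b →
      (∀ i, a i ≠ u ∧ b i ≠ u) → Pack adj col k := by
    intro Q a b h hu
    refine ⟨Q, a, b, fun i => ?_, h.disj⟩
    have h' := h.isP i
    have e1 := hκ _ (hu i).1
    have e2 := hκ _ (hu i).2
    exact ⟨h'.nodup, h'.chain, h'.head, h'.last, e1 ▸ h'.ca, e2 ▸ h'.cb, by
      rw [← e1, ← e2]; exact h'.ne⟩
  by_cases hue : ∀ i, a i ≠ u ∧ b i ≠ u
  · exact fin Q a b hQ hue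
  have hue' : ∃ j0, a j0 = u ∨ b j0 = u := by
    by_contra hcon
    push Not at hcon
    exact hue hcon
  obtain ⟨j0, hj0⟩ := hue'
  have huQ : u ∈ Q j0 := by
    rcases hj0 with h | h
    · rw [← h]; exact (hQ.isP j0).a_mem
    · rw [← h]; exact (hQ.isP j0).b_mem
  have hother : ∀ i, i ≠ j0 → a i ≠ u ∧ b i ≠ u := by
    intro i hi
    constructor
    · intro he; exact hQ.disj i j0 hi _ (hQ.isP i).a_mem (he ▸ huQ)
    · intro he; exact hQ.disj i j0 hi _ (hQ.isP i).b_mem (he ▸ huQ)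
  -- count end points
  have hinjQ := ends_injective hQ.disj (fun i => (hQ.isP i).a_mem) (fun i => (hQ.isP i).b_mem)
    (fun i => (hQ.isP i).a_ne_b)
  have hinjP := ends_injective hP.disj (fun i => List.mem_of_mem_head? (hP.head i))
    (fun i => List.mem_of_mem_getLast? (hP.last i)) hP.ne
  have hr : ∃ r, (∃ i, r = pa i ∨ r = pb i) ∧ ∀ i, r ≠ a i ∧ r ≠ b i := by
    by_contra hcon
    push Not at hcon
    let EQ := Finset.univ.image (Sum.elim a b)
    let EP := Finset.univ.image (Sum.elim pa pb)
    have h1 : EP ⊆ EQ.erase u := by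
      intro r hr
      simp only [EP, Finset.mem_image, Finset.mem_univ, true_and] at hr
      have hr' : ∃ i, r = pa i ∨ r = pb i := by
        obtain ⟨i | i, hi⟩ := hr
        · exact ⟨i, Or.inl hi.symm⟩
        · exact ⟨i, Or.inr hi.symm⟩
      rw [Finset.mem_erase]
      constructor
      · rintro rfl
        obtain ⟨i, hi | hi⟩ := hr'
        · exact hP.ca i (hi ▸ hu)
        · exact hP.cb i (hi ▸ hu)
      · obtain ⟨i, hi⟩ := hcon r hr'
        simp only [EQ, Finset.mem_image, Finset.mem_univ, true_and]
        by_cases hra : r = a i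
        · exact ⟨Sum.inl i, hra.symm⟩
        · exact ⟨Sum.inr i, (hi hra).symm⟩
    have h2 : u ∈ EQ := by
      simp only [EQ, Finset.mem_image, Finset.mem_univ, true_and]
      rcases hj0 with h | h
      · exact ⟨Sum.inl j0, h⟩
      · exact ⟨Sum.inr j0, h⟩
    have h3 := Finset.card_le_card h1
    have h4 := Finset.card_erase_lt_of_mem h2
    have h5 : EQ.card = EP.card := by
      simp only [EQ, EP]
      rw [Finset.card_image_of_injective _ hinjQ, Finset.card_image_of_injective _ hinjP]
    omega
  obtain ⟨r, ⟨i, hri⟩, hrQ⟩ := hr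
  obtain ⟨R, z, hRn, hRc, hRP, hRh, hRl, hRN, hRm, hRt, hcr, hcz, hval, hc0⟩ := hP.orient hs hri
  have hru : r ≠ u := by rintro rfl; exact hcr hu
  have hrQ' : ∀ j, r ∉ Q j := by
    intro j hj
    rcases hQt j r hj (by rw [hκc r hcr]; exact hcr) with h | h
    · exact (hrQ j).1 h
    · exact (hrQ j).2 h
  -- immediate case
  by_cases hdir : i = i0 ∧ u ∉ P i0
  · obtain ⟨rfl, hnu⟩ := hdir
    have hadj : adj r u := by
      have := hu2.resolve_left hnu
      rcases hri with rfl | rfl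
      · exact this.1
      · exact this.2
    have hrc : κ r = some c := by rw [hκc r hcr]; exact hc0 rfl
    have : ∃ l b', IsP adj κ l u b' ∧ ∀ y ∈ l, y ∈ Q j0 := by
      rcases hj0 with h | h
      · exact ⟨Q j0, b j0, h ▸ hQ.isP j0, fun y hy => hy⟩
      · exact ⟨(Q j0).reverse, a j0, h ▸ (hQ.isP j0).reverse hs, fun y hy => by simpa using hy⟩
    obtain ⟨l, b', hl, hlsub⟩ := this
    have hb'u : b' ≠ u := hl.a_ne_b.symm
    refine hQ.replace (j := j0) (l := r :: l) (a' := r) (b' := b') ⟨?_, ?_, rfl, ?_, hcr, ?_, ?_⟩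
      (fun j hj => ⟨(hκ _ (hother j hj).1).symm, (hκ _ (hother j hj).2).symm⟩) ?_
    · exact List.nodup_cons.2 ⟨fun h => hrQ' j0 (hlsub _ h), hl.nodup⟩
    · rw [List.isChain_cons]
      refine ⟨?_, hl.chain⟩
      intro y hy
      rw [hl.head] at hy
      simp at hy; subst hy; exact hadj
    · rw [List.getLast?_cons, hl.last]; rfl
    · rw [← hκ b' hb'u]; exact hl.cb
    · rw [← hκ b' hb'u, ← hκc r hcr, hrc, ← hκu]; exact hl.ne
    · intro y hy j hj
      rcases List.mem_cons.1 hy with rfl | hy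
      · exact hrQ' j
      · exact fun h => hQ.disj j j0 hj y h (hlsub y hy)
  have hdir' : i ≠ i0 ∨ u ∈ R := by
    by_contra hcon
    push Not at hcon
    exact hdir ⟨hcon.1, fun h => hcon.2 ((hRm u).2 (hcon.1 ▸ h))⟩
  rcases hit_split (fun y => ∃ j, y ∈ Q j) R with hno | ⟨p1, x, p2, rfl, hx, hd⟩
  · have hi : i ≠ i0 := hdir'.resolve_right fun h => hno u h ⟨_, huQ⟩
    refine hQ.replace (j := j0) (l := R) (a' := r) (b' := z) ⟨hRn, hRc, hRh, hRl, hcr, hcz, hval hi⟩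
      (fun j hj => ⟨(hκ _ (hother j hj).1).symm, (hκ _ (hother j hj).2).symm⟩) ?_
    intro y hy j _ hyj
    exact hno y hy ⟨j, hyj⟩
  · have hp1 : p1 ≠ [] := by
      rintro rfl
      simp at hRh; subst hRh
      obtain ⟨j, hj⟩ := hx
      exact hrQ' j hj
    have hph : p1.head? = some r := by
      rw [← hRh]; cases p1 <;> simp_all
    have hrp : r ∈ p1 := List.mem_of_mem_head? hph
    have hzl : (x :: p2).getLast? = some z := by
      rw [← hRl, List.getLast?_append]; simp [List.getLast?_cons]
    have hrx : r ∉ x :: p2 := fun h => (List.nodup_append.1 hRn).2.2 r hrp r h rfl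
    have hzx : z ∈ x :: p2 := List.mem_of_mem_getLast? hzl
    obtain ⟨Q', a', b', hQ', -, hor⟩ := reroute_pack (PA := PAof P) (u := u) hs hPs hQ hQt hRn hRc
      hRP hRN hph hzl hx hd (by rw [hκc r hcr]; exact hcr) hru (by
        intro y hy hcy
        by_cases hyu : y = u
        · exact Or.inr hyu
        left
        rw [hκ y hyu] at hcy
        rcases hRt y (by simp at hy ⊢; tauto) hcy with h | h
        · exact absurd (h ▸ hy) hrx
        · exact h) (by
        by_cases hi : i = i0
        · right
          have huR := hdir'.resolve_left (fun h => h hi)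
          refine ⟨?_, ?_⟩
          · rcases List.mem_append.1 huR with h | h
            · exact absurd ⟨j0, huQ⟩ (hd u h)
            · exact h
          · rw [hκu, hκc r hcr, hc0 hi]
        · left
          rw [hκc r hcr, hκc z hcz]
          exact ⟨hcz, hval hi⟩)
    rcases hor with h | ⟨-, h⟩
    · have := hmin Q' a' b' hQ' (fun _ _ _ => trivial)
      omega
    · exact fin Q' a' b' hQ' h

/-- Adding a disjoint path to a packing. -/
theorem IsPack.add {m : ℕ} {Q : Fin m → List E} {a b : Fin m → E} (hQ : IsPack adj col Q a b)
    {l : List E} {a' b' : E} (hl : IsP adj col l a' b') (hd : ∀ y ∈ l, ∀ i, y ∉ Q i) :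
    Pack adj col (m + 1) := by
  refine ⟨Fin.cons l Q, Fin.cons a' a, Fin.cons b' b, ?_, ?_⟩
  · intro i
    refine Fin.cases ?_ (fun i => ?_) i
    · simpa using hl
    · simpa using hQ.isP i
  · intro i j
    refine Fin.cases ?_ (fun i => ?_) i <;> refine Fin.cases ?_ (fun j => ?_) j
    · intro h; exact absurd rfl h
    · intro _ y hy; simp at hy ⊢; exact hd y hy j
    · intro _ y hy hy'; simp at hy hy'; exact hd y hy' i hy
    · intro h y hy hy'; simp at hy hy'
      exact hQ.disj i j (fun e => h (by rw [e])) y hy hy'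

theorem stepB (hs : ∀ x y, adj x y → adj y x) {c d : C} (hcd : d ≠ c) {m : ℕ}
    {P : Fin (m + 1) → List E} {pa pb : Fin (m + 1) → E} {i0 : Fin (m + 1)}
    (hP : BadPack adj col c P pa pb i0)
    {u : E} (hu : col u = some d) (hu2 : adj (pa i0) u ∧ adj (pb i0) u)
    (hQ : ∃ (Q : Fin m → List E) (a b : Fin m → E), IsPack adj col Q a b ∧
      ∀ i, ∀ y ∈ Q i, y ≠ u) : Pack adj col (m + 1) := by
  have hPs : ∀ x y, PAof P x y → PAof P y x := fun x y ⟨i, hi⟩ => ⟨i, hi.symm⟩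
  obtain ⟨Q, a, b, hQ, hQt, hQu, hmin⟩ := exists_min (PA := PAof P) (fun y => y ≠ u) hQ
  have hinjP := ends_injective hP.disj (fun i => List.mem_of_mem_head? (hP.head i))
    (fun i => List.mem_of_mem_getLast? (hP.last i)) hP.ne
  have hr : ∃ r, (∃ i, r = pa i ∨ r = pb i) ∧ r ≠ u ∧ ∀ i, r ≠ a i ∧ r ≠ b i := by
    by_contra hcon
    push Not at hcon
    let EQ := Finset.univ.image (Sum.elim a b)
    let EP := Finset.univ.image (Sum.elim pa pb)
    have h1 : EP ⊆ insert u EQ := by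
      intro r hr
      simp only [EP, Finset.mem_image, Finset.mem_univ, true_and] at hr
      have hr' : ∃ i, r = pa i ∨ r = pb i := by
        obtain ⟨i | i, hi⟩ := hr
        · exact ⟨i, Or.inl hi.symm⟩
        · exact ⟨i, Or.inr hi.symm⟩
      rw [Finset.mem_insert]
      by_cases hru : r = u
      · exact Or.inl hru
      · right
        obtain ⟨i, hi⟩ := hcon r hr' hru
        simp only [EQ, Finset.mem_image, Finset.mem_univ, true_and]
        by_cases hra : r = a i
        · exact ⟨Sum.inl i, hra.symm⟩
        · exact ⟨Sum.inr i, (hi hra).symm⟩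
    have h3 := (Finset.card_le_card h1).trans (Finset.card_insert_le _ _)
    have h5 : EQ.card ≤ m + m := by
      refine Finset.card_image_le.trans ?_
      simp
    have h6 : EP.card = (m + 1) + (m + 1) := by
      simp only [EP]
      rw [Finset.card_image_of_injective _ hinjP]; simp
    omega
  obtain ⟨r, ⟨i, hri⟩, hru, hrQ⟩ := hr
  obtain ⟨R, z, hRn, hRc, hRP, hRh, hRl, hRN, hRm, hRt, hcr, hcz, hval, hc0⟩ := hP.orient hs hri
  have hrQ' : ∀ j, r ∉ Q j := by
    intro j hj
    rcases hQt j r hj hcr with h | h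
    · exact (hrQ j).1 h
    · exact (hrQ j).2 h
  by_cases hi : i = i0
  · subst hi
    have hadj : adj r u := by
      rcases hri with rfl | rfl
      · exact hu2.1
      · exact hu2.2
    refine hQ.add (l := [r, u]) (a' := r) (b' := u) ⟨by simp [hru], by simp [hadj], rfl, rfl, hcr,
      by simp [hu], by rw [hc0 rfl, hu]; simpa using hcd.symm⟩ ?_
    intro y hy j hyj
    simp at hy
    rcases hy with rfl | rfl
    · exact hrQ' j hyj
    · exact hQu j y hyj rfl
  have hval := hval hi
  rcases hit_split (fun y => ∃ j, y ∈ Q j) R with hno | ⟨p1, x, p2, rfl, hx, hd⟩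
  · exact hQ.add ⟨hRn, hRc, hRh, hRl, hcr, hcz, hval⟩ fun y hy j hyj => hno y hy ⟨j, hyj⟩
  · have hp1 : p1 ≠ [] := by
      rintro rfl
      simp at hRh; subst hRh
      obtain ⟨j, hj⟩ := hx
      exact hrQ' j hj
    have hph : p1.head? = some r := by
      rw [← hRh]; cases p1 <;> simp_all
    have hrp : r ∈ p1 := List.mem_of_mem_head? hph
    have hzl : (x :: p2).getLast? = some z := by
      rw [← hRl, List.getLast?_append]; simp [List.getLast?_cons]
    have hrx : r ∉ x :: p2 := fun h => (List.nodup_append.1 hRn).2.2 r hrp r h rfl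
    have hzx : z ∈ x :: p2 := List.mem_of_mem_getLast? hzl
    obtain ⟨Q', a', b', hQ', hsub, hor⟩ := reroute_pack (PA := PAof P) (u := u) hs hPs hQ hQt hRn
      hRc hRP hRN hph hzl hx hd hcr hru (by
        intro y hy hcy
        left
        rcases hRt y (by simp at hy ⊢; tauto) hcy with h | h
        · exact absurd (h ▸ hy) hrx
        · exact h) (Or.inl ⟨hcz, hval⟩)
    exfalso
    rcases hor with h | ⟨⟨j, h⟩, -⟩
    · have := hmin Q' a' b' hQ' (by
        intro j y hy
        rcases hsub j y hy with ⟨j', h⟩ | h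
        · exact hQu j' y h
        · rintro rfl
          rcases hRt y (by simp [h]) (by simp [hu]) with h' | h'
          · exact hru h'.symm
          · subst h'
            exact (List.nodup_append.1 hRn).2.2 y h y hzx rfl)
      omega
    · rcases h with h | h
      · exact hQu j _ (hQ.isP j).a_mem h.symm
      · exact hQu j _ (hQ.isP j).b_mem h.symm

/-- Extraction of the bad path. -/
theorem exists_bad (hs : ∀ x y, adj x y → adj y x) {c c' : C} {s : E} (hc : col s = some c)
    (hc' : ∀ e, col e ≠ some c') {k : ℕ} (hP : Pack adj (Function.update col s (some c')) k)
    (hno : ¬ Pack adj col k) :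
    ∃ (P : Fin k → List E) (pa pb : Fin k → E) (i0 : Fin k), BadPack adj col c P pa pb i0 := by
  obtain ⟨P0, pa0, pb0, hP0⟩ := hP
  obtain ⟨P, pa, pb, hP, hPt, -⟩ := hP0.tighten
  set κ := Function.update col s (some c') with hκdef
  have hκs : κ s = some c' := by simp [hκdef]
  have hκ : ∀ y, y ≠ s → κ y = col y := fun y hy => by simp [hκdef, hy]
  have hκn : ∀ y, κ y ≠ none ↔ col y ≠ none := by
    intro y
    by_cases hy : y = s
    · subst hy; simp [hκs, hc]
    · rw [hκ y hy]
  have hex : ∃ i0, col (pa i0) = col (pb i0) := by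
    by_contra hcon
    push Not at hcon
    apply hno
    refine ⟨P, pa, pb, fun i => ?_, hP.disj⟩
    have h := hP.isP i
    exact ⟨h.nodup, h.chain, h.head, h.last, (hκn _).1 h.ca, (hκn _).1 h.cb, hcon i⟩
  obtain ⟨i0, hi0⟩ := hex
  have h0 := hP.isP i0
  have hsi : pa i0 = s ∨ pb i0 = s := by
    by_contra hcon
    push Not at hcon
    apply h0.ne
    rw [hκ _ hcon.1, hκ _ hcon.2, hi0]
  have hsm : s ∈ P i0 := by
    rcases hsi with h | h
    · rw [← h]; exact h0.a_mem
    · rw [← h]; exact h0.b_mem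
  have hcc : col (pa i0) = some c ∧ col (pb i0) = some c := by
    rcases hsi with h | h
    · rw [← hi0, h]; exact ⟨hc, hc⟩
    · rw [hi0, h]; exact ⟨hc, hc⟩
  refine ⟨P, pa, pb, i0, fun i => (hP.isP i).nodup, fun i => (hP.isP i).chain,
    fun i => (hP.isP i).head, fun i => (hP.isP i).last, hP.disj, fun i => (hκn _).1 (hP.isP i).ca,
    fun i => (hκn _).1 (hP.isP i).cb, fun i => (hP.isP i).a_ne_b, ?_, ?_, hcc.1, hcc.2⟩
  · intro i y hy hcy
    exact hPt i y hy ((hκn y).2 hcy)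
  · intro i hi he
    have h := hP.isP i
    have n1 : pa i ≠ s := fun e => hP.disj i i0 hi s (e ▸ h.a_mem) hsm
    have n2 : pb i ≠ s := fun e => hP.disj i i0 hi s (e ▸ h.b_mem) hsm
    exact h.ne (by rw [hκ _ n1, hκ _ n2, he])

end

end MaderAux


namespace MaderAux
open Classical

section
variable {V E C : Type}

/-- Two elements are adjacent if they share a place. -/
def adjI (I : E → Finset V) (e e' : E) : Prop := ∃ v, v ∈ I e ∧ v ∈ I e'

theorem adjI_symm (I : E → Finset V) : ∀ x y, adjI I x y → adjI I y x :=
  fun _ _ ⟨v, h, h'⟩ => ⟨v, h', h⟩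

/-- A family of walks with distinct ends in `S`. -/
structure Fam (adj : E → E → Prop) (S : E → Prop) {k : ℕ} (Q : Fin k → List E)
    (g : Fin k ⊕ Fin k → E) : Prop where
  chain : ∀ i, (Q i).IsChain adj
  head : ∀ i, (Q i).head? = some (g (Sum.inl i))
  last : ∀ i, (Q i).getLast? = some (g (Sum.inr i))
  inj : Function.Injective g
  mem : ∀ x, S (g x)

/-- There is a strictly shorter family. -/
def Short (adj : E → E → Prop) (S : E → Prop) {k : ℕ} (Q : Fin k → List E) : Prop :=
  ∃ (Q' : Fin k → List E) (g' : Fin k ⊕ Fin k → E), Fam adj S Q' g' ∧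
    ∑ i, (Q' i).length < ∑ i, (Q i).length

variable {adj : E → E → Prop} {S : E → Prop} {k : ℕ} {Q : Fin k → List E} {g : Fin k ⊕ Fin k → E}

theorem Fam.replace (h : Fam adj S Q g) {i : Fin k} {l : List E} (hc : l.IsChain adj)
    (hh : l.head? = (Q i).head?) (hl : l.getLast? = (Q i).getLast?)
    (hlen : l.length < (Q i).length) : Short adj S Q := by
  refine ⟨Function.update Q i l, g, ⟨?_, ?_, ?_, h.inj, h.mem⟩, ?_⟩
  · intro j
    by_cases hj : j = i
    · subst hj; simpa using hc
    · simpa [hj] using h.chain j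
  · intro j
    by_cases hj : j = i
    · subst hj; simpa [hh] using h.head j
    · simpa [hj] using h.head j
  · intro j
    by_cases hj : j = i
    · subst hj; simpa [hl] using h.last j
    · simpa [hj] using h.last j
  · apply Finset.sum_lt_sum
    · intro j _
      by_cases hj : j = i
      · subst hj; simpa using hlen.le
      · simp [hj]
    · exact ⟨i, Finset.mem_univ _, by simpa using hlen⟩

theorem Fam.rev (hs : ∀ x y, adj x y → adj y x) (h : Fam adj S Q g) (i : Fin k) :
    Fam adj S (Function.update Q i (Q i).reverse) (g ∘ Equiv.swap (Sum.inl i) (Sum.inr i)) := by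
  refine ⟨?_, ?_, ?_, h.inj.comp (Equiv.injective _), fun x => h.mem _⟩
  · intro j
    by_cases hj : j = i
    · subst hj
      simp only [Function.update_self, List.isChain_reverse]
      exact (h.chain j).imp fun a b hab => hs _ _ hab
    · simpa [hj] using h.chain j
  · intro j
    by_cases hj : j = i
    · subst hj; simpa using h.last j
    · have : Equiv.swap (Sum.inl i) (Sum.inr i) (Sum.inl j : Fin k ⊕ Fin k) = Sum.inl j :=
        Equiv.swap_apply_of_ne_of_ne (by simpa using hj) (by simp)
      simpa [hj, this] using h.head j
  · intro j
    by_cases hj : j = i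
    · subst hj; simpa using h.head j
    · have : Equiv.swap (Sum.inl i) (Sum.inr i) (Sum.inr j : Fin k ⊕ Fin k) = Sum.inr j :=
        Equiv.swap_apply_of_ne_of_ne (by simp) (by simpa using hj)
      simpa [hj, this] using h.last j

theorem rev_sum (i : Fin k) : ∑ j, (Function.update Q i (Q i).reverse j).length =
    ∑ j, (Q j).length := by
  apply Finset.sum_congr rfl
  intro j _
  by_cases hj : j = i
  · subst hj; simp
  · simp [hj]

/-- Uncrossing. -/
theorem Fam.cross (h : Fam adj S Q g) {i j : Fin k} (hij : i ≠ j) {l1 l2 m1 m2 : List E}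
    {x p q : E} (hi : Q i = l1 ++ x :: l2) (hj : Q j = m1 ++ x :: m2)
    (hp : l1.getLast? = some p) (hq : m2.head? = some q) (hpq : adj p q) : Short adj S Q := by
  have ci := h.chain i
  have cj := h.chain j
  have hhi := h.head i
  have hhj := h.head j
  have hli := h.last i
  have hlj := h.last j
  rw [hi] at ci hhi hli
  rw [hj] at cj hhj hlj
  have hsw : ∀ n : Fin k, n ≠ i → n ≠ j →
      Equiv.swap (Sum.inr i) (Sum.inr j) (Sum.inr n : Fin k ⊕ Fin k) = Sum.inr n := fun n h1 h2 =>
        Equiv.swap_apply_of_ne_of_ne (by simpa using h1) (by simpa using h2)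
  have hsl : ∀ n : Fin k, 
      Equiv.swap (Sum.inr i) (Sum.inr j) (Sum.inl n : Fin k ⊕ Fin k) = Sum.inl n := fun n =>
        Equiv.swap_apply_of_ne_of_ne (by simp) (by simp)
  have hl1 : l1 ≠ [] := by rintro rfl; simp at hp
  have hm2 : m2 ≠ [] := by rintro rfl; simp at hq
  set R : Fin k → List E := Function.update (Function.update Q i (l1 ++ m2)) j (m1 ++ x :: l2)
    with hR
  have Ri : R i = l1 ++ m2 := by simp [hR, hij]
  have Rj : R j = m1 ++ x :: l2 := by simp [hR]
  have Rn : ∀ n, n ≠ i → n ≠ j → R n = Q n := fun n h1 h2 => by simp [hR, h1, h2]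
  refine ⟨R, g ∘ Equiv.swap (Sum.inr i) (Sum.inr j), ⟨?_, ?_, ?_, h.inj.comp (Equiv.injective _),
    fun x => h.mem _⟩, ?_⟩
  · intro n
    by_cases h1 : n = i
    · subst h1
      rw [Ri]
      refine List.isChain_append.2 ⟨(List.isChain_append.1 ci).1,
        (List.isChain_cons.1 (List.isChain_append.1 cj).2.1).2, ?_⟩
      intro a ha b hb
      rw [hp] at ha; rw [hq] at hb
      cases ha; cases hb; exact hpq
    by_cases h2 : n = j
    · subst h2
      rw [Rj]
      refine List.isChain_append.2 ⟨(List.isChain_append.1 cj).1, (List.isChain_append.1 ci).2.1, ?_⟩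
      intro a ha b hb
      exact (List.isChain_append.1 cj).2.2 a ha b (by simpa using hb)
    · rw [Rn n h1 h2]; exact h.chain n
  · intro n
    simp only [Function.comp, hsl]
    by_cases h1 : n = i
    · subst h1
      rw [Ri, ← hhi]
      cases l1 <;> simp_all
    by_cases h2 : n = j
    · subst h2
      rw [Rj, ← hhj]
      cases m1 <;> simp
    · rw [Rn n h1 h2]; exact h.head n
  · intro n
    simp only [Function.comp]
    by_cases h1 : n = i
    · subst h1
      rw [Ri, Equiv.swap_apply_left, ← hlj]
      rw [List.getLast?_append, List.getLast?_append, List.getLast?_cons]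
      obtain ⟨w, hw⟩ := Option.isSome_iff_exists.1 (List.getLast?_isSome.2 hm2)
      simp [hw]
    by_cases h2 : n = j
    · subst h2
      rw [Rj, Equiv.swap_apply_right, ← hli]
      simp [List.getLast?_append, List.getLast?_cons]
    · rw [Rn n h1 h2, hsw n h1 h2]; exact h.last n
  · have key : ∀ f : Fin k → List E, ∑ n, (f n).length = (f i).length + (f j).length +
        ∑ n ∈ (Finset.univ.erase i).erase j, (f n).length := by
      intro f
      rw [add_assoc, Finset.add_sum_erase _ (fun n => (f n).length) (by simp [hij.symm]),
        Finset.add_sum_erase _ (fun n => (f n).length) (by simp)]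
    rw [key R, key Q, Ri, Rj, hi, hj]
    have : ∑ n ∈ (Finset.univ.erase i).erase j, (R n).length =
        ∑ n ∈ (Finset.univ.erase i).erase j, (Q n).length := by
      apply Finset.sum_congr rfl
      intro n hn
      simp at hn
      rw [Rn n hn.2 hn.1]
    rw [this]
    simp only [List.length_append, List.length_cons]
    omega

theorem Fam.cut1 (h : Fam adj S Q g) {i : Fin k} {l1 l2 : List E}
    {x p q : E} (hi : Q i = l1 ++ x :: l2)
    (hp : l1.getLast? = some p) (hq : l2.head? = some q) (hpq : adj p q) : Short adj S Q := by
  have ci := h.chain i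
  rw [hi] at ci
  have hl1 : l1 ≠ [] := by rintro rfl; simp at hp
  have hl2 : l2 ≠ [] := by rintro rfl; simp at hq
  refine h.replace (i := i) (l := l1 ++ l2) ?_ ?_ ?_ ?_
  · refine List.isChain_append.2 ⟨(List.isChain_append.1 ci).1,
        (List.isChain_cons.1 (List.isChain_append.1 ci).2.1).2, ?_⟩
    intro a ha b hb
    rw [hp] at ha; rw [hq] at hb
    cases ha; cases hb; exact hpq
  · rw [hi]; cases l1 <;> simp_all
  · rw [hi, List.getLast?_append, List.getLast?_append, List.getLast?_cons]
    obtain ⟨w, hw⟩ := Option.isSome_iff_exists.1 (List.getLast?_isSome.2 hl2)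
    simp [hw]
  · rw [hi]; simp

theorem Fam.cut2 (h : Fam adj S Q g) (i : Fin k) (hn : ¬ (Q i).Nodup) : Short adj S Q := by
  have : ∃ x l1 l2 l3, Q i = l1 ++ x :: (l2 ++ x :: l3) := by
    obtain ⟨x, hx⟩ := List.exists_duplicate_iff_not_nodup.2 hn
    rw [List.duplicate_iff_sublist] at hx
    generalize Q i = L at hx
    clear hn
    have hxL : x ∈ L := hx.subset (by simp)
    obtain ⟨l1, l2, rfl, hx1⟩ := List.eq_append_cons_of_mem hxL
    have : x ∈ l2 := by
      have := hx.count_le x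
      rw [List.count_append, List.count_eq_zero_of_not_mem hx1] at this
      simp at this
      exact this
    obtain ⟨l3, l4, rfl⟩ := List.append_of_mem this
    exact ⟨x, l1, l3, l4, rfl⟩
  obtain ⟨x, l1, l2, l3, hi⟩ := this
  have ci := h.chain i
  rw [hi] at ci
  refine h.replace (i := i) (l := l1 ++ x :: l3) ?_ ?_ ?_ ?_
  · have c1 := List.isChain_append.1 ci
    have c2 := List.isChain_append.1 (List.isChain_cons.1 c1.2.1).2
    exact List.isChain_append.2 ⟨c1.1, c2.2.1, fun a ha b hb => c1.2.2 a ha b (by simpa using hb)⟩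
  · rw [hi]; cases l1 <;> simp
  · rw [hi]; simp [List.getLast?_append, List.getLast?_cons]
  · rw [hi]; simp

end
end MaderAux


namespace MaderAux
open Classical

section
variable {V E C : Type}
variable {S : E → Prop} {k : ℕ} {Q : Fin k → List E} {g : Fin k ⊕ Fin k → E}

theorem Fam.disj {I : E → Finset V} (hI : ∀ e, ∀ a ∈ I e, ∀ b ∈ I e, ∀ c ∈ I e, a = b ∨ a = c ∨ b = c)
    (h : Fam (adjI I) S Q g) {i j : Fin k} (hij : i ≠ j) {x : E} (hxi : x ∈ Q i) (hxj : x ∈ Q j) :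
    Short (adjI I) S Q := by
  have hs := adjI_symm I
  obtain ⟨l1, l2, hi⟩ := List.append_of_mem hxi
  obtain ⟨m1, m2, hj⟩ := List.append_of_mem hxj
  have ci := h.chain i
  have cj := h.chain j
  have hhi := h.head i
  have hhj := h.head j
  have hli := h.last i
  have hlj := h.last j
  rw [hi] at ci hhi hli
  rw [hj] at cj hhj hlj
  have n1 : l1.getLast? = none → x = g (Sum.inl i) := by
    intro h; rw [List.getLast?_eq_none_iff] at h; subst h; simpa using hhi
  have n2 : l2.head? = none → x = g (Sum.inr i) := by
    intro h; rw [List.head?_eq_none_iff] at h; subst h; simpa using hli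
  have n3 : m1.getLast? = none → x = g (Sum.inl j) := by
    intro h; rw [List.getLast?_eq_none_iff] at h; subst h; simpa using hhj
  have n4 : m2.head? = none → x = g (Sum.inr j) := by
    intro h; rw [List.head?_eq_none_iff] at h; subst h; simpa using hlj
  have a1 : ∀ p, l1.getLast? = some p → adjI I p x := fun p hp =>
    (List.isChain_append.1 ci).2.2 p hp x (by simp)
  have a3 : ∀ p, m1.getLast? = some p → adjI I p x := fun p hp =>
    (List.isChain_append.1 cj).2.2 p hp x (by simp)
  have a2 : ∀ p, l2.head? = some p → adjI I p x := fun p hp =>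
    hs _ _ ((List.isChain_cons.1 (List.isChain_append.1 ci).2.1).1 p hp)
  have a4 : ∀ p, m2.head? = some p → adjI I p x := fun p hp =>
    hs _ _ ((List.isChain_cons.1 (List.isChain_append.1 cj).2.1).1 p hp)
  have pig : ∀ p q r, adjI I p x → adjI I q x → adjI I r x →
      adjI I p q ∨ adjI I p r ∨ adjI I q r := by
    rintro p q r ⟨a, ha, ha'⟩ ⟨b, hb, hb'⟩ ⟨c, hc, hc'⟩
    rcases hI x a ha' b hb' c hc' with rfl | rfl | rfl
    · exact Or.inl ⟨_, ha, hb⟩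
    · exact Or.inr (Or.inl ⟨_, ha, hc⟩)
    · exact Or.inr (Or.inr ⟨_, hb, hc⟩)
  have s12 : ∀ p q, l1.getLast? = some p → l2.head? = some q → adjI I p q → Short (adjI I) S Q :=
    fun p q hp hq hpq => h.cut1 hi hp hq hpq
  have s34 : ∀ p q, m1.getLast? = some p → m2.head? = some q → adjI I p q → Short (adjI I) S Q :=
    fun p q hp hq hpq => h.cut1 hj hp hq hpq
  have s14 : ∀ p q, l1.getLast? = some p → m2.head? = some q → adjI I p q → Short (adjI I) S Q :=
    fun p q hp hq hpq => h.cross hij hi hj hp hq hpq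
  have s32 : ∀ p q, m1.getLast? = some p → l2.head? = some q → adjI I p q → Short (adjI I) S Q :=
    fun p q hp hq hpq => h.cross hij.symm hj hi hp hq hpq
  have s13 : ∀ p q, l1.getLast? = some p → m1.getLast? = some q → adjI I p q →
      Short (adjI I) S Q := by
    intro p q hp hq hpq
    have h' := h.rev hs j
    have := h'.cross (i := i) (j := j) hij (l1 := l1) (l2 := l2) (m1 := m2.reverse)
      (m2 := m1.reverse) (x := x) (by simpa [hij] using hi) (by simp [hj]) hp (by simpa using hq) hpq
    obtain ⟨Q', g', h1, h2⟩ := this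
    rw [rev_sum] at h2
    exact ⟨Q', g', h1, h2⟩
  have s24 : ∀ p q, l2.head? = some p → m2.head? = some q → adjI I p q →
      Short (adjI I) S Q := by
    intro p q hp hq hpq
    have h' := h.rev hs i
    have := h'.cross (i := i) (j := j) hij (l1 := l2.reverse) (l2 := l1.reverse) (m1 := m1)
      (m2 := m2) (x := x) (by simp [hi]) (by simpa [hij.symm] using hj) (by simpa using hp) hq hpq
    obtain ⟨Q', g', h1, h2⟩ := this
    rw [rev_sum] at h2
    exact ⟨Q', g', h1, h2⟩
  have ne : ∀ y z, y ≠ z → x = g y → x = g z → False := fun y z hyz h1 h2 =>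
    hyz (h.inj (h1.symm.trans h2))
  rcases o1 : l1.getLast? with _ | p1
  · rcases o2 : l2.head? with _ | p2
    · exact (ne _ _ (by simp) (n1 o1) (n2 o2)).elim
    rcases o3 : m1.getLast? with _ | p3
    · exact (ne _ _ (by simpa using hij) (n1 o1) (n3 o3)).elim
    rcases o4 : m2.head? with _ | p4
    · exact (ne _ _ (by simp) (n1 o1) (n4 o4)).elim
    rcases pig p3 p2 p4 (a3 _ o3) (a2 _ o2) (a4 _ o4) with hh | hh | hh
    · exact s32 _ _ o3 o2 hh
    · exact s34 _ _ o3 o4 hh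
    · exact s24 _ _ o2 o4 hh
  · rcases o2 : l2.head? with _ | p2
    · rcases o3 : m1.getLast? with _ | p3
      · exact (ne _ _ (by simp) (n2 o2) (n3 o3)).elim
      rcases o4 : m2.head? with _ | p4
      · exact (ne _ _ (by simpa using hij) (n2 o2) (n4 o4)).elim
      rcases pig p1 p3 p4 (a1 _ o1) (a3 _ o3) (a4 _ o4) with hh | hh | hh
      · exact s13 _ _ o1 o3 hh
      · exact s14 _ _ o1 o4 hh
      · exact s34 _ _ o3 o4 hh
    · rcases o3 : m1.getLast? with _ | p3
      · rcases o4 : m2.head? with _ | p4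
        · exact (ne _ _ (by simp) (n3 o3) (n4 o4)).elim
        rcases pig p1 p2 p4 (a1 _ o1) (a2 _ o2) (a4 _ o4) with hh | hh | hh
        · exact s12 _ _ o1 o2 hh
        · exact s14 _ _ o1 o4 hh
        · exact s24 _ _ o2 o4 hh
      · rcases pig p1 p3 p2 (a1 _ o1) (a3 _ o3) (a2 _ o2) with hh | hh | hh
        · exact s13 _ _ o1 o3 hh
        · exact s12 _ _ o1 o2 hh
        · exact s32 _ _ o3 o2 hh

theorem Fam.exists_good {I : E → Finset V}
    (hI : ∀ e, ∀ a ∈ I e, ∀ b ∈ I e, ∀ c ∈ I e, a = b ∨ a = c ∨ b = c)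
    (h : Fam (adjI I) S Q g) : ∃ (Q' : Fin k → List E) (g' : Fin k ⊕ Fin k → E),
      Fam (adjI I) S Q' g' ∧ (∀ i, (Q' i).Nodup) ∧ ∀ i j, i ≠ j → ∀ x ∈ Q' i, x ∉ Q' j := by
  induction hn : ∑ i, (Q i).length using Nat.strong_induction_on generalizing Q g with
  | _ n ih =>
  subst hn
  by_cases hsh : Short (adjI I) S Q
  · obtain ⟨Q', g', h1, h2⟩ := hsh
    exact ih _ h2 h1 rfl
  · refine ⟨Q, g, h, fun i => ?_, fun i j hij x hx hx' => hsh (h.disj hI hij hx hx')⟩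
    by_contra hc
    exact hsh (h.cut2 i hc)

/-- Pairing up elements within fibres. -/
theorem exists_pairs {D : Type} [Fintype D] (F : D → Finset E)
    (hF : ∀ Y Z e, e ∈ F Y → e ∈ F Z → Y = Z) (k : ℕ) (hk : k ≤ ∑ Y, (F Y).card / 2) :
    ∃ g : Fin k ⊕ Fin k → E, Function.Injective g ∧
      ∀ i, ∃ Y, g (Sum.inl i) ∈ F Y ∧ g (Sum.inr i) ∈ F Y := by
  have hι : Nonempty (Fin k ↪ Σ Y, Fin ((F Y).card / 2)) := by
    apply Function.Embedding.nonempty_of_card_le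
    simpa using hk
  obtain ⟨ι⟩ := hι
  let p : (Σ Y, Fin ((F Y).card)) → E := fun s => ((F s.1).equivFin.symm s.2 : E)
  have pm : ∀ s, p s ∈ F s.1 := fun s => ((F s.1).equivFin.symm s.2).2
  have pinj : Function.Injective p := by
    rintro ⟨Y, i⟩ ⟨Z, j⟩ h
    have e1 := pm ⟨Y, i⟩
    have e2 := pm ⟨Z, j⟩
    rw [h] at e1
    obtain rfl : Y = Z := hF _ _ _ e1 e2
    have : (F Y).equivFin.symm i = (F Y).equivFin.symm j := Subtype.ext h
    rw [(F Y).equivFin.symm.injective this]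
  let q0 : (Σ Y, Fin ((F Y).card / 2)) → (Σ Y, Fin ((F Y).card)) := fun s =>
    ⟨s.1, ⟨2 * s.2.1, by have := s.2.2; omega⟩⟩
  let q1 : (Σ Y, Fin ((F Y).card / 2)) → (Σ Y, Fin ((F Y).card)) := fun s =>
    ⟨s.1, ⟨2 * s.2.1 + 1, by have := s.2.2; omega⟩⟩
  have h0 : Function.Injective q0 := by
    rintro ⟨Y, i⟩ ⟨Z, j⟩ h
    have hYZ : Y = Z := congrArg Sigma.fst h
    subst hYZ
    simp only [q0, Sigma.mk.injEq, heq_eq_eq, true_and, Fin.mk.injEq] at h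
    have : i = j := Fin.ext (by omega)
    rw [this]
  have h1 : Function.Injective q1 := by
    rintro ⟨Y, i⟩ ⟨Z, j⟩ h
    have hYZ : Y = Z := congrArg Sigma.fst h
    subst hYZ
    simp only [q1, Sigma.mk.injEq, heq_eq_eq, true_and, Fin.mk.injEq] at h
    have : i = j := Fin.ext (by omega)
    rw [this]
  have h01 : ∀ s t, q0 s ≠ q1 t := by
    rintro ⟨Y, i⟩ ⟨Z, j⟩ h
    have hYZ : Y = Z := congrArg Sigma.fst h
    subst hYZ
    simp only [q0, q1, Sigma.mk.injEq, heq_eq_eq, true_and, Fin.mk.injEq] at h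
    omega
  refine ⟨Sum.elim (fun i => p (q0 (ι i))) (fun i => p (q1 (ι i))), ?_, fun i => ?_⟩
  · apply Function.Injective.sumElim
    · exact pinj.comp (h0.comp ι.injective)
    · exact pinj.comp (h1.comp ι.injective)
    · intro a b h
      exact h01 _ _ (pinj h)
  · exact ⟨(ι i).1, pm (q0 (ι i)), pm (q1 (ι i))⟩

variable [Fintype V] [Fintype E]

def cols (I : E → Finset V) (col : E → Option C) (φ : V → C ⊕ V) (e : E) : Set C :=
  {c | col e = some c ∨ ∃ v ∈ I e, φ v = Sum.inl c}

noncomputable def UU (I : E → Finset V) (col : E → Option C) (φ : V → C ⊕ V) : Finset E :=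
  Finset.univ.filter fun e => ∃ c d, c ≠ d ∧ c ∈ cols I col φ e ∧ d ∈ cols I col φ e

noncomputable def BB (I : E → Finset V) (col : E → Option C) (φ : V → C ⊕ V) (Y : V) : Finset E :=
  Finset.univ.filter fun e => e ∉ UU I col φ ∧ (∃ v ∈ I e, φ v = Sum.inr Y) ∧
    ((∃ c, c ∈ cols I col φ e) ∨ ∃ v ∈ I e, ∃ Z, Z ≠ Y ∧ φ v = Sum.inr Z)

noncomputable def Val (I : E → Finset V) (col : E → Option C) (φ : V → C ⊕ V) : ℕ :=
  (UU I col φ).card + ∑ Y, (BB I col φ Y).card / 2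

theorem base {I : E → Finset V}
    (hI : ∀ e, ∀ a ∈ I e, ∀ b ∈ I e, ∀ c ∈ I e, a = b ∨ a = c ∨ b = c)
    {col : E → Option C} (hcol : ∀ e f, col e ≠ none → col e = col f → e = f)
    (hk : ∀ φ : V → C ⊕ V, k ≤ Val I col φ) : Pack (adjI I) col k := by
  have hs := adjI_symm I
  let r : V → V → Prop := fun v w => ∃ e, v ∈ I e ∧ w ∈ I e
  have rs : ∀ v w, Relation.ReflTransGen r v w → Relation.ReflTransGen r w v := by
    intro v w h
    induction h with
    | refl => exact .refl
    | tail _ h2 ih =>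
      obtain ⟨e, h3, h4⟩ := h2
      exact ih.head ⟨e, h4, h3⟩
  let sd : Setoid V := ⟨Relation.ReflTransGen r, fun _ => Relation.ReflTransGen.refl,
    fun h => rs _ _ h, fun h1 h2 => h1.trans h2⟩
  let ρ : V → V := fun v => (Quotient.mk sd v).out
  have hρ : ∀ v w, Relation.ReflTransGen r v w → ρ v = ρ w := fun v w h =>
    congrArg Quotient.out (Quotient.sound (s := sd) h)
  have hρ' : ∀ v w, ρ v = ρ w → Relation.ReflTransGen r v w := fun v w h => by
    have := Quotient.out_injective h
    exact Quotient.exact this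
  have reach : ∀ v w, Relation.ReflTransGen r v w → ∀ a b, v ∈ I a → w ∈ I b →
      Relation.ReflTransGen (adjI I) a b := by
    intro v w h a b ha
    induction h generalizing b with
    | refl => exact fun hb => Relation.ReflTransGen.single ⟨v, ha, hb⟩
    | tail _ h2 ih =>
      obtain ⟨e, h3, h4⟩ := h2
      exact fun hb => (ih e h3).tail ⟨_, h4, hb⟩
  let φ : V → C ⊕ V := fun v => Sum.inr (ρ v)
  have hcols : ∀ e c, c ∈ cols I col φ e ↔ col e = some c := by
    intro e c
    simp [cols, φ]
  have hU : UU I col φ = ∅ := by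
    rw [UU, Finset.filter_eq_empty_iff]
    rintro e - ⟨c, d, hcd, hc, hd⟩
    rw [hcols] at hc hd
    rw [hc] at hd
    exact hcd (Option.some.inj hd)
  have hB : ∀ Y e, e ∈ BB I col φ Y → (∃ v ∈ I e, ρ v = Y) ∧ col e ≠ none := by
    intro Y e he
    simp only [BB, Finset.mem_filter, Finset.mem_univ, true_and, hcols, φ, Sum.inr.injEq] at he
    obtain ⟨-, ⟨v, hv, hvY⟩, h⟩ := he
    refine ⟨⟨v, hv, hvY⟩, ?_⟩
    rcases h with ⟨c, hc⟩ | ⟨w, hw, Z, hZ, hwZ⟩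
    · rw [hc]; simp
    · exact (hZ (by rw [← hwZ, ← hvY]; exact hρ _ _ (.single ⟨e, hw, hv⟩))).elim
  have hk' := hk φ
  rw [Val, hU, Finset.card_empty, zero_add] at hk'
  obtain ⟨g, gi, hg⟩ := exists_pairs (BB I col φ) (by
    intro Y Z e hY hZ
    obtain ⟨⟨v, hv, hvY⟩, -⟩ := hB _ _ hY
    obtain ⟨⟨w, hw, hwY⟩, -⟩ := hB _ _ hZ
    rw [← hvY, ← hwY]; exact hρ _ _ (.single ⟨e, hv, hw⟩)) k hk'
  have hQ : ∀ i, ∃ l : List E, l.IsChain (adjI I) ∧ l.head? = some (g (Sum.inl i)) ∧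
      l.getLast? = some (g (Sum.inr i)) := by
    intro i
    obtain ⟨Y, h1, h2⟩ := hg i
    obtain ⟨⟨v, hv, hvY⟩, -⟩ := hB _ _ h1
    obtain ⟨⟨w, hw, hwY⟩, -⟩ := hB _ _ h2
    obtain ⟨l, hl, hl'⟩ := List.exists_isChain_cons_of_relationReflTransGen
      (reach v w (hρ' _ _ (hvY.trans hwY.symm)) _ _ hv hw)
    refine ⟨_, hl, rfl, ?_⟩
    rw [List.getLast?_eq_getLast_of_ne_nil (List.cons_ne_nil _ _), hl']
  choose Q hQ1 hQ2 hQ3 using hQ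
  have hF : Fam (adjI I) (fun e => col e ≠ none) Q g := by
    refine ⟨hQ1, hQ2, hQ3, gi, ?_⟩
    rintro (i | i)
    · obtain ⟨Y, h1, h2⟩ := hg i
      exact (hB _ _ h1).2
    · obtain ⟨Y, h1, h2⟩ := hg i
      exact (hB _ _ h2).2
  obtain ⟨Q', g', hF', hn, hd⟩ := hF.exists_good hI
  refine ⟨Q', fun i => g' (Sum.inl i), fun i => g' (Sum.inr i), fun i => ?_, hd⟩
  refine ⟨hn i, hF'.chain i, hF'.head i, hF'.last i, hF'.mem _, hF'.mem _, fun he => ?_⟩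
  have := hF'.inj (hcol _ _ (hF'.mem _) he)
  simp at this

end
end MaderAux


namespace MaderAux
open Classical
set_option linter.unusedSectionVars false
set_option linter.unusedVariables false

section
variable {V E C : Type} [Fintype V] [Fintype E]

theorem half_sum_le {D : Type} [Fintype D] {U U' : Finset E} {b b' : D → Finset E} (hU : U ⊆ U')
    (hb : ∀ Y, b Y ⊆ b' Y ∪ (U' \ U))
    (hone : ∀ e ∈ U' \ U, ∀ Y Z, e ∈ b Y → e ∈ b Z → Y = Z) :
    U.card + ∑ Y, (b Y).card / 2 ≤ U'.card + ∑ Y, (b' Y).card / 2 := by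
  have h1 : U'.card = U.card + (U' \ U).card := by
    rw [Finset.card_sdiff_of_subset hU]
    have := Finset.card_le_card hU
    omega
  have h2 : ∀ Y, (b Y).card / 2 ≤ (b' Y).card / 2 + (b Y ∩ (U' \ U)).card := by
    intro Y
    have : (b Y).card ≤ (b' Y).card + (b Y ∩ (U' \ U)).card := by
      refine le_trans (Finset.card_le_card ?_) (Finset.card_union_le _ _)
      intro e he
      rcases Finset.mem_union.1 (hb Y he) with h | h
      · exact Finset.mem_union_left _ h
      · exact Finset.mem_union_right _ (Finset.mem_inter.2 ⟨he, h⟩)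
    omega
  have h3 : ∑ Y, (b Y ∩ (U' \ U)).card ≤ (U' \ U).card := by
    rw [← Finset.card_biUnion]
    · apply Finset.card_le_card
      intro e he
      simp only [Finset.mem_biUnion, Finset.mem_inter] at he
      obtain ⟨_, -, -, h⟩ := he
      exact h
    · intro Y _ Z _ hYZ
      refine Finset.disjoint_left.2 ?_
      intro e he he'
      rw [Finset.mem_inter] at he he'
      exact hYZ (hone e he.2 Y Z he.1 he'.1)
  have h4 := Finset.sum_le_sum (s := Finset.univ) fun Y _ => h2 Y
  rw [Finset.sum_add_distrib] at h4
  omega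

theorem mem_UU {I : E → Finset V} {col : E → Option C} {φ : V → C ⊕ V} {e : E} :
    e ∈ UU I col φ ↔ ∃ c d, c ≠ d ∧ c ∈ cols I col φ e ∧ d ∈ cols I col φ e := by
  simp [UU]

theorem mem_BB {I : E → Finset V} {col : E → Option C} {φ : V → C ⊕ V} {Y : V} {e : E} :
    e ∈ BB I col φ Y ↔ e ∉ UU I col φ ∧ (∃ v ∈ I e, φ v = Sum.inr Y) ∧
    ((∃ c, c ∈ cols I col φ e) ∨ ∃ v ∈ I e, ∃ Z, Z ≠ Y ∧ φ v = Sum.inr Z) := by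
  simp [BB]

theorem two_labels {I : E → Finset V} {φ : V → C ⊕ V} {e : E}
    (hI : ∀ a ∈ I e, ∀ b ∈ I e, ∀ c ∈ I e, a = b ∨ a = c ∨ b = c) {Y Z : V} (hYZ : Y ≠ Z)
    (hY : ∃ v ∈ I e, φ v = Sum.inr Y) (hZ : ∃ v ∈ I e, φ v = Sum.inr Z) :
    (∀ v ∈ I e, φ v = Sum.inr Y ∨ φ v = Sum.inr Z) := by
  obtain ⟨v, hv, hvY⟩ := hY
  obtain ⟨w, hw, hwZ⟩ := hZ
  intro a ha
  rcases hI v hv w hw a ha with h | h | h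
  · subst h
    rw [hvY] at hwZ
    exact (hYZ (Sum.inr.inj hwZ)).elim
  · subst h; exact Or.inl hvY
  · subst h; exact Or.inr hwZ

theorem not_UU {I : E → Finset V} {col : E → Option C} {φ : V → C ⊕ V} {e : E}
    (hI : ∀ a ∈ I e, ∀ b ∈ I e, ∀ c ∈ I e, a = b ∨ a = c ∨ b = c) {Y Z : V} (hYZ : Y ≠ Z)
    (hY : ∃ v ∈ I e, φ v = Sum.inr Y) (hZ : ∃ v ∈ I e, φ v = Sum.inr Z) :
    e ∉ UU I col φ := by
  have h2 := two_labels hI hYZ hY hZ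
  rw [mem_UU]
  rintro ⟨c, d, hcd, hc, hd⟩
  have key : ∀ c, c ∈ cols I col φ e → col e = some c := by
    rintro c (h | ⟨v, hv, h⟩)
    · exact h
    · rcases h2 v hv with h' | h' <;> simp [h] at h'
  have := (key c hc).symm.trans (key d hd)
  exact hcd (Option.some.inj this)

theorem Val_le {I I' : E → Finset V} {col col' : E → Option C} {φ φ' : V → C ⊕ V}
    (hI : ∀ e, ∀ a ∈ I' e, ∀ b ∈ I' e, ∀ c ∈ I' e, a = b ∨ a = c ∨ b = c)
    (hl : ∀ e Y, (∃ v ∈ I e, φ v = Sum.inr Y) ↔ (∃ v ∈ I' e, φ' v = Sum.inr Y))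
    (m : C → C) (hc : ∀ e, ∀ c ∈ cols I col φ e, ∃ c' ∈ cols I' col' φ' e, m c' = c) :
    Val I col φ ≤ Val I' col' φ' := by
  have hU : UU I col φ ⊆ UU I' col' φ' := by
    intro e he
    rw [mem_UU] at he ⊢
    obtain ⟨c, d, hcd, h1, h2⟩ := he
    obtain ⟨c', h3, h4⟩ := hc e c h1
    obtain ⟨d', h5, h6⟩ := hc e d h2
    refine ⟨c', d', ?_, h3, h5⟩
    rintro rfl
    exact hcd (h4.symm.trans h6)
  refine half_sum_le hU ?_ ?_
  · intro Y e he
    obtain ⟨h1, h2, h3⟩ := mem_BB.1 he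
    by_cases he' : e ∈ UU I' col' φ'
    · exact Finset.mem_union_right _ (Finset.mem_sdiff.2 ⟨he', h1⟩)
    · refine Finset.mem_union_left _ (mem_BB.2 ⟨he', (hl e Y).1 h2, ?_⟩)
      rcases h3 with ⟨c, hcc⟩ | ⟨v, hv, Z, hZ, hvZ⟩
      · obtain ⟨c', h, -⟩ := hc e c hcc
        exact Or.inl ⟨c', h⟩
      · obtain ⟨w, hw, hwZ⟩ := (hl e Z).1 ⟨v, hv, hvZ⟩
        exact Or.inr ⟨w, hw, Z, hZ, hwZ⟩
  · intro e he Y Z hY hZ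
    by_contra hYZ
    exact not_UU (hI e) hYZ ((hl e Y).1 (mem_BB.1 hY).2.1) ((hl e Z).1 (mem_BB.1 hZ).2.1)
      (Finset.mem_sdiff.1 he).1

/-- Deleting an element lowers the value by at most one. -/
theorem Val_delete {I : E → Finset V} {col : E → Option C}
    (hI : ∀ e, ∀ a ∈ I e, ∀ b ∈ I e, ∀ c ∈ I e, a = b ∨ a = c ∨ b = c) (u : E) (φ : V → C ⊕ V) :
    ∃ φ' : V → C ⊕ V, Val I col φ' ≤
      Val (Function.update I u ∅) (Function.update col u none) φ + 1 := by
  set I' := Function.update I u ∅ with hI'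
  set col' := Function.update col u none with hcol'
  have In : ∀ e, e ≠ u → I' e = I e := fun e he => by simp [hI', he]
  have cn : ∀ e, e ≠ u → col' e = col e := fun e he => by simp [hcol', he]
  by_cases hY : ∃ Y Z, Y ≠ Z ∧ (∃ v ∈ I u, φ v = Sum.inr Y) ∧ (∃ v ∈ I u, φ v = Sum.inr Z)
  · obtain ⟨Y1, Y2, hYY, hY1, hY2⟩ := hY
    have h2 := two_labels (hI u) hYY hY1 hY2
    let φ' : V → C ⊕ V := fun v => if φ v = Sum.inr Y2 then Sum.inr Y1 else φ v
    have p1 : ∀ v c, φ' v = Sum.inl c ↔ φ v = Sum.inl c := by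
      intro v c
      simp only [φ']
      split_ifs with h <;> simp [h]
    have p2 : ∀ v, φ' v ≠ Sum.inr Y2 := by
      intro v
      simp only [φ']
      split_ifs with h
      · simpa using hYY
      · exact h
    have p3 : ∀ v Y, Y ≠ Y1 → φ' v = Sum.inr Y → φ v = Sum.inr Y := by
      intro v Y hY h
      simp only [φ'] at h
      split_ifs at h with h'
      · exact (hY (Sum.inr.inj h).symm).elim
      · exact h
    have p4 : ∀ v, φ' v = Sum.inr Y1 → φ v = Sum.inr Y1 ∨ φ v = Sum.inr Y2 := by
      intro v h
      simp only [φ'] at h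
      split_ifs at h with h'
      · exact Or.inr h'
      · exact Or.inl h
    have hcols : ∀ e, e ≠ u → cols I col φ' e = cols I' col' φ e := by
      intro e he
      simp only [cols, In e he, cn e he, p1]
    have hUn : ∀ e, e ≠ u → (e ∈ UU I col φ' ↔ e ∈ UU I' col' φ) := by
      intro e he
      rw [mem_UU, mem_UU, hcols e he]
    have hu1 : ∀ v ∈ I u, φ' v = Sum.inr Y1 := by
      intro v hv
      rcases h2 v hv with h | h <;> simp [φ', h]
    have huU : u ∉ UU I col φ' := by
      rw [mem_UU]
      rintro ⟨c, d, hcd, hc, hd⟩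
      have key : ∀ c, c ∈ cols I col φ' u → col u = some c := by
        rintro c (h | ⟨v, hv, h⟩)
        · exact h
        · simp [hu1 v hv] at h
      exact hcd (Option.some.inj ((key c hc).symm.trans (key d hd)))
    have hU : UU I col φ' ⊆ UU I' col' φ := by
      intro e he
      have : e ≠ u := by rintro rfl; exact huU he
      exact (hUn e this).1 he
    have hbY2 : BB I col φ' Y2 = ∅ := by
      rw [Finset.eq_empty_iff_forall_notMem]
      intro e he
      obtain ⟨-, ⟨v, -, hv⟩, -⟩ := mem_BB.1 he
      exact p2 v hv
    have hbY1 : BB I col φ' Y1 ⊆ insert u (BB I' col' φ Y1 ∪ BB I' col' φ Y2) := by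
      intro e he
      by_cases heu : e = u
      · simp [heu]
      apply Finset.mem_insert_of_mem
      obtain ⟨h3, ⟨v, hv, hv'⟩, h5⟩ := mem_BB.1 he
      have h6 : (∃ c, c ∈ cols I' col' φ e) ∨
          ∃ v ∈ I' e, ∃ Z, Z ≠ Y1 ∧ Z ≠ Y2 ∧ φ v = Sum.inr Z := by
        rcases h5 with h | ⟨w, hw, Z, hZ, hwZ⟩
        · rw [hcols e heu] at h; exact Or.inl h
        · refine Or.inr ⟨w, by rwa [In e heu], Z, hZ, ?_, p3 w Z hZ hwZ⟩
          rintro rfl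
          exact p2 w hwZ
      rw [hUn e heu] at h3
      rw [Finset.mem_union, mem_BB, mem_BB]
      rcases p4 v hv' with h | h
      · refine Or.inl ⟨h3, ⟨v, by rwa [In e heu], h⟩, ?_⟩
        rcases h6 with h | ⟨w, hw, Z, hZ, hZ', hwZ⟩
        · exact Or.inl h
        · exact Or.inr ⟨w, hw, Z, hZ, hwZ⟩
      · refine Or.inr ⟨h3, ⟨v, by rwa [In e heu], h⟩, ?_⟩
        rcases h6 with h | ⟨w, hw, Z, hZ, hZ', hwZ⟩
        · exact Or.inl h
        · exact Or.inr ⟨w, hw, Z, hZ', hwZ⟩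
    have hbY : ∀ Y, Y ≠ Y1 → Y ≠ Y2 → BB I col φ' Y ⊆ BB I' col' φ Y := by
      intro Y hn1 hn2 e he
      obtain ⟨h3, ⟨v, hv, hv'⟩, h5⟩ := mem_BB.1 he
      have heu : e ≠ u := by
        rintro rfl
        rw [hu1 v hv] at hv'
        exact hn1 (Sum.inr.inj hv').symm
      refine mem_BB.2 ⟨by rwa [← hUn e heu], ⟨v, by rwa [In e heu], p3 v Y hn1 hv'⟩, ?_⟩
      rcases h5 with h | ⟨w, hw, Z, hZ, hwZ⟩
      · rw [hcols e heu] at h; exact Or.inl h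
      · right
        by_cases hZ1 : Z = Y1
        · subst hZ1
          rcases p4 w hwZ with h | h
          · exact ⟨w, by rwa [In e heu], _, hZ, h⟩
          · exact ⟨w, by rwa [In e heu], _, hn2.symm, h⟩
        · exact ⟨w, by rwa [In e heu], Z, hZ, p3 w Z hZ1 hwZ⟩
    refine ⟨φ', ?_⟩
    have key : ∀ f : V → ℕ, ∑ Y, f Y = f Y1 + f Y2 +
        ∑ Y ∈ (Finset.univ.erase Y1).erase Y2, f Y := by
      intro f
      rw [add_assoc, Finset.add_sum_erase _ f (by simp [hYY.symm]),
        Finset.add_sum_erase _ f (by simp)]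
    rw [Val, Val, key, key]
    have e1 := Finset.card_le_card hU
    have e2 := (Finset.card_le_card hbY1).trans (Finset.card_insert_le _ _)
    have e3 := Finset.card_union_le (BB I' col' φ Y1) (BB I' col' φ Y2)
    have e4 : ∑ Y ∈ (Finset.univ.erase Y1).erase Y2, (BB I col φ' Y).card / 2 ≤
        ∑ Y ∈ (Finset.univ.erase Y1).erase Y2, (BB I' col' φ Y).card / 2 := by
      apply Finset.sum_le_sum
      intro Y hY
      simp at hY
      exact Nat.div_le_div_right (Finset.card_le_card (hbY Y hY.2 hY.1))
    have e5 : (BB I col φ' Y2).card = 0 := by rw [hbY2]; rfl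
    omega
  · refine ⟨φ, ?_⟩
    have hcols : ∀ e, e ≠ u → cols I col φ e = cols I' col' φ e := by
      intro e he
      simp only [cols, In e he, cn e he]
    have hUn : ∀ e, e ≠ u → (e ∈ UU I col φ ↔ e ∈ UU I' col' φ) := by
      intro e he
      rw [mem_UU, mem_UU, hcols e he]
    have hUu : u ∉ UU I' col' φ := by
      rw [mem_UU]
      rintro ⟨c, d, -, hc, -⟩
      simp [cols, hI', hcol'] at hc
    have := half_sum_le (U := UU I col φ) (U' := insert u (UU I' col' φ)) (b := BB I col φ)
      (b' := BB I' col' φ) (by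
        intro e he
        by_cases heu : e = u
        · simp [heu]
        · exact Finset.mem_insert_of_mem ((hUn e heu).1 he)) (by
        intro Y e he
        by_cases heu : e = u
        · subst heu
          exact Finset.mem_union_right _ (Finset.mem_sdiff.2 ⟨by simp, (mem_BB.1 he).1⟩)
        · apply Finset.mem_union_left
          rw [mem_BB] at he ⊢
          rwa [← hUn e heu, ← hcols e heu, In e heu]) (by
        intro e he Y Z hY1 hZ1
        rw [Finset.mem_sdiff] at he
        have heu : e = u := by
          by_contra heu
          rcases Finset.mem_insert.1 he.1 with h | h
          · exact heu h
          · exact he.2 ((hUn e heu).2 h)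
        subst heu
        by_contra hYZ
        exact hY ⟨Y, Z, hYZ, (mem_BB.1 hY1).2.1, (mem_BB.1 hZ1).2.1⟩)
    rw [Finset.card_insert_of_notMem hUu] at this
    rw [Val, Val]
    omega

end
end MaderAux


namespace MaderAux
open Classical

section
variable {V E C : Type} [Fintype V] [Fintype E]

noncomputable def meas (I : E → Finset V) (col : E → Option C) : ℕ :=
  4 * ∑ e, (I e).card + 2 * (Finset.univ.filter fun e => col e = none).card +
    (Fintype.card E - (Finset.univ.image col).card)

theorem ncol_le (col : E → Option C) : (Finset.univ.image col).card ≤ Fintype.card E :=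
  Finset.card_image_le

theorem meas_recolour (I : E → Finset V) (col : E → Option C) {s t : E} {c c' : C} (hst : s ≠ t)
    (hs : col s = some c) (ht : col t = some c) (hc' : ∀ e, col e ≠ some c') :
    meas I (Function.update col s (some c')) < meas I col := by
  have h1 : (Finset.univ.filter fun e => Function.update col s (some c') e = none) ⊆
      (Finset.univ.filter fun e => col e = none) := by
    intro e he
    simp only [Finset.mem_filter, Finset.mem_univ, true_and] at he ⊢
    by_cases h : e = s
    · subst h; simp at he
    · simpa [h] using he
  have h2 : insert (some c') (Finset.univ.image col) ⊆
      Finset.univ.image (Function.update col s (some c')) := by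
    intro x hx
    rw [Finset.mem_insert] at hx
    rw [Finset.mem_image]
    rcases hx with rfl | hx
    · exact ⟨s, by simp, by simp⟩
    · obtain ⟨e, -, rfl⟩ := Finset.mem_image.1 hx
      by_cases h : e = s
      · subst h
        exact ⟨t, by simp, by simp [hst.symm, hs, ht]⟩
      · exact ⟨e, by simp, by simp [h]⟩
  have h3 : some c' ∉ Finset.univ.image col := by
    simpa using hc'
  have e1 := Finset.card_le_card h1
  have e2 := Finset.card_le_card h2
  rw [Finset.card_insert_of_notMem h3] at e2
  have e3 := ncol_le (Function.update col s (some c'))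
  unfold meas
  omega

theorem meas_colour (I : E → Finset V) (col : E → Option C) {u : E} {c : C}
    (hu : col u = none) :
    meas I (Function.update col u (some c)) < meas I col := by
  have h1 : (Finset.univ.filter fun e => Function.update col u (some c) e = none) ⊆
      (Finset.univ.filter fun e => col e = none).erase u := by
    intro e he
    simp only [Finset.mem_filter, Finset.mem_univ, true_and, Finset.mem_erase] at he ⊢
    by_cases h : e = u
    · subst h; simp at he
    · exact ⟨h, by simpa [h] using he⟩
  have h2 : Finset.univ.image col ⊆
      insert none (Finset.univ.image (Function.update col u (some c))) := by
    intro x hx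
    obtain ⟨e, -, rfl⟩ := Finset.mem_image.1 hx
    by_cases h : e = u
    · subst h
      simp [hu]
    · exact Finset.mem_insert_of_mem (Finset.mem_image.2 ⟨e, by simp, by simp [h]⟩)
  have e1 := Finset.card_le_card h1
  have hm : u ∈ (Finset.univ.filter fun e => col e = none) := by simp [hu]
  rw [Finset.card_erase_of_mem hm] at e1
  have e0 := Finset.card_pos.2 ⟨u, hm⟩
  have e2 := (Finset.card_le_card h2).trans (Finset.card_insert_le _ _)
  have e3 := ncol_le (Function.update col u (some c))
  have e4 := ncol_le col
  unfold meas
  omega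

theorem meas_place {I I' : E → Finset V} (col : E → Option C) (h : ∀ e, I' e ⊆ I e) {e : E} {v : V}
    (hv : v ∈ I e) (hv' : v ∉ I' e) : meas I' col < meas I col := by
  have : ∑ e, (I' e).card < ∑ e, (I e).card := by
    apply Finset.sum_lt_sum
    · exact fun e _ => Finset.card_le_card (h e)
    · exact ⟨e, Finset.mem_univ _, Finset.card_lt_card ⟨h e, fun h' => hv' (h' hv)⟩⟩
  unfold meas
  omega

theorem meas_delete {I : E → Finset V} (col : E → Option C) {u : E} {v : V} (hv : v ∈ I u) :
    meas (Function.update I u ∅) (Function.update col u none) < meas I col := by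
  have h0 : ∑ e, (Function.update I u ∅ e).card < ∑ e, (I e).card := by
    apply Finset.sum_lt_sum
    · intro e _
      apply Finset.card_le_card
      by_cases h : e = u
      · subst h; simp
      · simp [h]
    · exact ⟨u, Finset.mem_univ _, by simpa using ⟨v, hv⟩⟩
  have h1 : (Finset.univ.filter fun e => Function.update col u none e = none) ⊆
      insert u (Finset.univ.filter fun e => col e = none) := by
    intro e he
    simp only [Finset.mem_filter, Finset.mem_univ, true_and, Finset.mem_insert] at he ⊢
    by_cases h : e = u
    · exact Or.inl h
    · exact Or.inr (by simpa [h] using he)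
  have h2 : Finset.univ.image col ⊆
      insert (col u) (Finset.univ.image (Function.update col u none)) := by
    intro x hx
    obtain ⟨e, -, rfl⟩ := Finset.mem_image.1 hx
    by_cases h : e = u
    · subst h
      simp
    · exact Finset.mem_insert_of_mem (Finset.mem_image.2 ⟨e, by simp, by simp [h]⟩)
  have e1 := (Finset.card_le_card h1).trans (Finset.card_insert_le _ _)
  have e2 := (Finset.card_le_card h2).trans (Finset.card_insert_le _ _)
  have e3 := ncol_le (Function.update col u none)
  have e4 := ncol_le col
  unfold meas
  omega

theorem main_ind [Infinite C] (n : ℕ) : ∀ (I : E → Finset V) (col : E → Option C) (k : ℕ),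
    (∀ e, ∀ a ∈ I e, ∀ b ∈ I e, ∀ c ∈ I e, a = b ∨ a = c ∨ b = c) →
    meas I col = n → (∀ φ : V → C ⊕ V, k ≤ Val I col φ) → Pack (adjI I) col k := by
  induction n using Nat.strong_induction_on with
  | _ n ih =>
  rintro I col k hI rfl hk
  have hs := adjI_symm I
  by_cases hcol : ∀ e f, col e ≠ none → col e = col f → e = f
  · exact base hI hcol hk
  push Not at hcol
  obtain ⟨s, t, hsn, hst, hne⟩ := hcol
  obtain ⟨c, hc⟩ := Option.ne_none_iff_exists'.1 hsn
  have hct : col t = some c := hst ▸ hc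
  obtain ⟨c', hc'⟩ : ∃ c' : C, ∀ e, col e ≠ some c' := by
    obtain ⟨c', hc'⟩ := Infinite.exists_notMem_finset
      ((Finset.univ.image col).biUnion fun o => o.toFinset)
    refine ⟨c', fun e he => hc' ?_⟩
    simp only [Finset.mem_biUnion, Finset.mem_image, Finset.mem_univ, true_and]
    exact ⟨some c', ⟨e, he⟩, by simp⟩
  by_contra hno
  -- recolouring `s` by a fresh colour
  have step4 : Pack (adjI I) (Function.update col s (some c')) k := by
    refine ih _ (meas_recolour I col hne hc hct hc') I _ k hI rfl ?_
    intro φ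
    let m : C → C := fun d => if d = c' then c else d
    let φ' : V → C ⊕ V := fun v => Sum.map m id (φ v)
    refine (hk φ').trans (Val_le hI ?_ m ?_)
    · intro e Y
      have : ∀ v, φ' v = Sum.inr Y ↔ φ v = Sum.inr Y := by
        intro v
        simp only [φ']
        rcases φ v with d | d <;> simp
      simp only [this]
    · rintro e d (h | ⟨v, hv, h⟩)
      · by_cases hes : e = s
        · subst hes
          rw [hc] at h
          cases h
          exact ⟨c', Or.inl (by simp), by simp [m]⟩
        · refine ⟨d, Or.inl (by simpa [hes] using h), ?_⟩
          have : d ≠ c' := by rintro rfl; exact hc' e h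
          simp [m, this]
      · simp only [φ'] at h
        rcases hφ : φ v with d' | d'
        · rw [hφ] at h
          simp at h
          exact ⟨d', Or.inr ⟨v, hv, hφ⟩, h⟩
        · rw [hφ] at h
          simp at h
  obtain ⟨P, pa, pb, i0, hP⟩ := exists_bad hs hc hc' step4 hno
  -- colouring an uncoloured element by `c`
  have step3 : ∀ u, col u = none → Pack (adjI I) (Function.update col u (some c)) k := by
    intro u hu
    refine ih _ (meas_colour I col hu) I _ k hI rfl ?_
    intro φ
    refine (hk φ).trans (Val_le hI (fun _ _ => Iff.rfl) id ?_)
    rintro e d (h | h)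
    · refine ⟨d, Or.inl ?_, rfl⟩
      have : e ≠ u := by rintro rfl; simp [hu] at h
      simpa [this] using h
    · exact ⟨d, Or.inr h, rfl⟩
  by_cases hint : ∃ u ∈ P i0, u ≠ pa i0 ∧ u ≠ pb i0
  · obtain ⟨u, hu, hua, hub⟩ := hint
    have hun : col u = none := by
      by_contra h
      rcases hP.tight i0 u hu h with h | h
      · exact hua h
      · exact hub h
    exact hno (stepA hs hP hun (Or.inl hu) (step3 u hun))
  push Not at hint
  have hadj : adjI I (pa i0) (pb i0) := by
    have h1 := hP.head i0
    have h2 := hP.last i0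
    have h3 := hP.chain i0
    have h4 := hP.nodup i0
    have h5 := hP.ne i0
    rcases hL : P i0 with _ | ⟨x, _ | ⟨y, l⟩⟩
    · rw [hL] at h1; simp at h1
    · rw [hL] at h1 h2
      simp at h1 h2
      exact (h5 (h1.symm.trans h2)).elim
    · rw [hL] at h1 h3 h4
      simp at h1
      subst h1
      have hy : y = pb i0 := by
        refine hint y (by simp [hL]) ?_
        rintro rfl
        simp at h4
      rw [← hy]
      exact (List.isChain_cons_cons.1 h3).1
  obtain ⟨v, hva, hvb⟩ := hadj
  by_cases hall : ∀ u, v ∈ I u → col u = some c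
  · -- delete the place `v`
    have : Pack (adjI fun e => (I e).erase v) col k := by
      refine ih _ (meas_place col (I' := fun e => (I e).erase v) (fun e => Finset.erase_subset _ _)
        hva (by simp)) _ col k ?_ rfl ?_
      · intro e a ha b hb c hc
        exact hI e a (Finset.mem_of_mem_erase ha) b (Finset.mem_of_mem_erase hb) c
          (Finset.mem_of_mem_erase hc)
      · intro φ
        refine (hk (Function.update φ v (Sum.inl c))).trans (Val_le ?_ ?_ id ?_)
        · intro e a ha b hb c hc
          exact hI e a (Finset.mem_of_mem_erase ha) b (Finset.mem_of_mem_erase hb) c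
            (Finset.mem_of_mem_erase hc)
        · intro e Y
          constructor
          · rintro ⟨w, hw, h⟩
            have hwv : w ≠ v := by rintro rfl; simp at h
            exact ⟨w, Finset.mem_erase.2 ⟨hwv, hw⟩, by simpa [hwv] using h⟩
          · rintro ⟨w, hw, h⟩
            have hwv := Finset.ne_of_mem_erase hw
            exact ⟨w, Finset.mem_of_mem_erase hw, by simpa [hwv] using h⟩
        · rintro e d (h | ⟨w, hw, h⟩)
          · exact ⟨d, Or.inl h, rfl⟩
          · by_cases hwv : w = v
            · subst hwv
              simp at h
              subst h
              exact ⟨c, Or.inl (hall e hw), rfl⟩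
            · exact ⟨d, Or.inr ⟨w, Finset.mem_erase.2 ⟨hwv, hw⟩, by simpa [hwv] using h⟩, rfl⟩
    obtain ⟨Q, a, b, hQ⟩ := this
    refine hno ⟨Q, a, b, fun i => ?_, hQ.disj⟩
    have h := hQ.isP i
    refine ⟨h.nodup, h.chain.imp ?_, h.head, h.last, h.ca, h.cb, h.ne⟩
    rintro x y ⟨w, h1, h2⟩
    exact ⟨w, Finset.mem_of_mem_erase h1, Finset.mem_of_mem_erase h2⟩
  push Not at hall
  obtain ⟨u, hvu, hu⟩ := hall
  have hu2 : adjI I (pa i0) u ∧ adjI I (pb i0) u := ⟨⟨v, hva, hvu⟩, ⟨v, hvb, hvu⟩⟩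
  rcases hcu : col u with _ | d
  · exact hno (stepA hs hP hcu (Or.inr hu2) (step3 u hcu))
  · have hdc : d ≠ c := by rintro rfl; exact hu hcu
    obtain ⟨m, rfl⟩ : ∃ m, k = m + 1 := ⟨k - 1, by have := i0.2; omega⟩
    refine hno (stepB hs hdc hP hcu hu2 ?_)
    have : Pack (adjI (Function.update I u ∅)) (Function.update col u none) m := by
      refine ih _ (meas_delete col hvu) _ _ m ?_ rfl ?_
      · intro e
        by_cases h : e = u
        · subst h; simp
        · simpa [h] using hI e
      · intro φ
        obtain ⟨φ', h⟩ := Val_delete (col := col) hI u φ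
        have := hk φ'
        omega
    obtain ⟨Q, a, b, hQ⟩ := this
    have hcol : ∀ y, Function.update col u none y ≠ none → y ≠ u ∧
        Function.update col u none y = col y := by
      intro y hy
      have : y ≠ u := by rintro rfl; simp at hy
      exact ⟨this, by simp [this]⟩
    refine ⟨Q, a, b, ⟨fun i => ?_, hQ.disj⟩, fun i y hy => ?_⟩
    · have h := hQ.isP i
      have e1 := (hcol _ h.ca).2
      have e2 := (hcol _ h.cb).2
      refine ⟨h.nodup, h.chain.imp ?_, h.head, h.last, e1 ▸ h.ca, e2 ▸ h.cb, ?_⟩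
      · rintro x y ⟨w, h1, h2⟩
        have hx : x ≠ u := by rintro rfl; simp at h1
        have hy : y ≠ u := by rintro rfl; simp at h2
        simp only [Function.update_of_ne hx] at h1
        simp only [Function.update_of_ne hy] at h2
        exact ⟨w, h1, h2⟩
      · rw [← e1, ← e2]; exact h.ne
    · rintro rfl
      have h := hQ.isP i
      obtain ⟨l1, l2, hl⟩ := List.append_of_mem hy
      have hch := h.chain
      have hh := h.head
      rw [hl] at hch hh
      rcases List.eq_nil_or_concat l1 with rfl | ⟨l, z, rfl⟩
      · simp at hh
        exact (hcol _ h.ca).1 hh.symm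
      · obtain ⟨w, -, hw⟩ := (List.isChain_append.1 hch).2.2 z (by simp) y (by simp)
        simp at hw

end
end MaderAux


namespace MaderAux
open Classical Multigraph

section
variable {V E : Type} {G : Multigraph V E}

theorem cut_iff {X : Set V} {e : E} {u v : V} (he : G.inc e = s(u, v)) :
    e ∈ G.cut X ↔ ¬ (u ∈ X ↔ v ∈ X) := by
  constructor
  · rintro ⟨x, y, h, hx, hy⟩
    rw [he, Sym2.eq_iff] at h
    rcases h with ⟨rfl, rfl⟩ | ⟨rfl, rfl⟩
    · exact fun hh => hy (hh.1 hx)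
    · exact fun hh => hy (hh.2 hx)
  · intro h
    by_cases hu : u ∈ X
    · exact ⟨u, v, he, hu, fun hv => h ⟨fun _ => hv, fun _ => hu⟩⟩
    · exact ⟨v, u, by rw [he, Sym2.eq_swap], by tauto, hu⟩

theorem walk_parity (X : Set V) {a b : V} (p : G.Walk a b) :
    Even (p.edges.countP (fun e => e ∈ G.cut X)) ↔ (a ∈ X ↔ b ∈ X) := by
  induction p with
  | nil v => simp [Walk.edges]
  | @cons u v w e he p ih =>
    simp only [Walk.edges, List.countP_cons]
    by_cases h : e ∈ G.cut X
    · have := (cut_iff he).1 h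
      simp only [h, decide_true, if_true, Nat.even_add_one, ih]
      tauto
    · have := mt (cut_iff he).2 h
      simp only [h, decide_false]
      simp only [Bool.false_eq_true, if_false, add_zero, ih]
      tauto

theorem first_mem_support {a b : V} (p : G.Walk a b) : a ∈ p.support := by
  cases p <;> simp [Walk.support]

theorem edge_support {a b : V} (p : G.Walk a b) {e : E} (he : e ∈ p.edges) {x : V}
    (hx : x ∈ G.inc e) : x ∈ p.support := by
  induction p with
  | nil v => simp [Walk.edges] at he
  | @cons u v w f hf p ih =>
    simp only [Walk.edges, List.mem_cons] at he
    simp only [Walk.support, List.mem_cons]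
    rcases he with rfl | he
    · rw [hf, Sym2.mem_iff] at hx
      rcases hx with rfl | rfl
      · exact Or.inl rfl
      · exact Or.inr (first_mem_support p)
    · exact Or.inr (ih he)

theorem edges_nodup {a b : V} (p : G.Walk a b) (h : p.support.Nodup) : p.edges.Nodup := by
  induction p with
  | nil v => simp [Walk.edges]
  | @cons u v w f hf p ih =>
    simp only [Walk.support, List.nodup_cons] at h
    simp only [Walk.edges, List.nodup_cons]
    exact ⟨fun hh => h.1 (edge_support p hh (by rw [hf]; simp)), ih h.2⟩

theorem edges_ne_nil {a b : V} (p : G.Walk a b) (h : a ≠ b) : p.edges ≠ [] := by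
  cases p with
  | nil => exact (h rfl).elim
  | cons => simp [Walk.edges]

theorem comp_closed {K S : Set V} (hK : G.IsComponentOf K S) {x y : V} {e : E}
    (he : G.inc e = s(x, y)) (hx : x ∈ K) (hy : y ∈ S) : y ∈ K := by
  refine (hK.2.2 x hx y hy).1 ⟨Walk.cons e he (Walk.nil y), ?_⟩
  intro z hz
  simp only [Walk.support, List.mem_cons, List.not_mem_nil, or_false] at hz
  rcases hz with rfl | rfl
  · exact hK.2.1 hx
  · exact hy

theorem comp_unique {K K' S : Set V} (hK : G.IsComponentOf K S) (hK' : G.IsComponentOf K' S) {x : V}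
    (hx : x ∈ K) (hx' : x ∈ K') : K = K' := by
  ext y
  constructor
  · intro hy
    exact (hK'.2.2 x hx' y (hK.2.1 hy)).1 ((hK.2.2 x hx y (hK.2.1 hy)).2 hy)
  · intro hy
    exact (hK.2.2 x hx y (hK'.2.1 hy)).1 ((hK'.2.2 x hx' y (hK'.2.1 hy)).2 hy)

theorem comp_cut_ends {K S : Set V} (hK : G.IsComponentOf K S) {e : E} (he : e ∈ G.cut K) :
    ∃ x y, G.inc e = s(x, y) ∧ x ∈ K ∧ y ∉ S := by
  obtain ⟨x, y, h, hx, hy⟩ := he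
  exact ⟨x, y, h, hx, fun hyS => hy (comp_closed hK h hx hyS)⟩

theorem comp_cut_unique {K K' S : Set V} (hK : G.IsComponentOf K S) (hK' : G.IsComponentOf K' S)
    {e : E} (he : e ∈ G.cut K) (he' : e ∈ G.cut K') : K = K' := by
  obtain ⟨x, y, h, hx, hy⟩ := comp_cut_ends hK he
  obtain ⟨x', y', h', hx', hy'⟩ := comp_cut_ends hK' he'
  rw [h, Sym2.eq_iff] at h'
  rcases h' with ⟨rfl, rfl⟩ | ⟨rfl, rfl⟩
  · exact comp_unique hK hK' hx hx'
  · exact (hy' (hK.2.1 hx)).elim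

variable [Fintype V] [Fintype E]

noncomputable def cutF (G : Multigraph V E) (X : Set V) : Finset E :=
  Finset.univ.filter (· ∈ G.cut X)

theorem cut_ncard (X : Set V) : (G.cut X).ncard = (cutF G X).card := by
  rw [← Set.ncard_coe_finset]
  congr 1
  ext e
  simp [cutF]

theorem mem_cutF {X : Set V} {e : E} : e ∈ cutF G X ↔ e ∈ G.cut X := by simp [cutF]

theorem walk_inter_card (X : Set V) {a b : V} (p : G.Walk a b) (h : p.support.Nodup) :
    (cutF G X ∩ p.edges.toFinset).card = p.edges.countP (fun e => e ∈ G.cut X) := by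
  rw [List.countP_eq_length_filter, ← List.toFinset_card_of_nodup ((edges_nodup p h).filter _)]
  congr 1
  ext e
  simp [mem_cutF, and_comm]

theorem weak_duality {T : Set V} (P : Set (G.TPath T)) (hP : G.TPathDisjoint P) (A : V → Set V)
    (hA : IsTPartition T A) :
    2 * P.ncard + {Y : Set V | G.IsComponentOf Y (⋃ t ∈ T, A t)ᶜ ∧ Odd (G.cut Y).ncard}.ncard ≤
      ∑ t ∈ (Set.toFinite T).toFinset, (G.cut (A t)).ncard := by
  set S : Set V := (⋃ t ∈ T, A t)ᶜ with hS
  have hTA : ∀ t ∈ T, t ∈ A t := fun t ht => by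
    have : t ∈ A t ∩ T := by rw [hA.1 t ht]; rfl
    exact this.1
  have hTA' : ∀ t ∈ T, ∀ t' ∈ T, t ∈ A t' → t = t' := fun t ht t' ht' h => by
    have : t ∈ A t' ∩ T := ⟨h, ht⟩
    rw [hA.1 t' ht'] at this
    exact this
  have hTS : ∀ t ∈ T, t ∉ S := fun t ht h => h (Set.mem_biUnion ht (hTA t ht))
  have hfin : P.Finite := by
    have : ∀ p : G.TPath T, ∃ e, e ∈ p.walk.edges := fun p =>
      List.exists_mem_of_ne_nil _ (edges_ne_nil p.walk p.ne)
    choose f hf using this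
    refine Set.Finite.of_finite_image (f := f) (Set.toFinite _) ?_
    intro p hp q hq hpq
    by_contra hne
    exact hP p hp q hq hne (f p) (hf p) (hpq ▸ hf q)
  set Pf := hfin.toFinset with hPf
  have hPc : P.ncard = Pf.card := Set.ncard_eq_toFinset_card P hfin
  set F : G.TPath T → Finset E := fun p => p.walk.edges.toFinset with hF
  set EF := Pf.biUnion F with hEF
  have hsum : ∀ X : Finset E, (X ∩ EF).card = ∑ p ∈ Pf, (X ∩ F p).card := by
    intro X
    rw [hEF, Finset.inter_biUnion, Finset.card_biUnion]
    intro p hp q hq hpq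
    refine Finset.disjoint_left.2 ?_
    intro e he he'
    simp only [Finset.mem_inter, hF, List.mem_toFinset] at he he'
    exact hP p (hfin.mem_toFinset.1 hp) q (hfin.mem_toFinset.1 hq) hpq e he.2 he'.2
  set Tf := (Set.toFinite T).toFinset with hTf
  have memTf : ∀ t, t ∈ Tf ↔ t ∈ T := fun t => by simp [hTf]
  have h1 : ∀ p ∈ Pf, 2 ≤ ∑ t ∈ Tf, (cutF G (A t) ∩ F p).card := by
    intro p _
    have hpos : ∀ t, ¬ (p.first ∈ A t ↔ p.last ∈ A t) → 1 ≤ (cutF G (A t) ∩ F p).card := by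
      intro t ht
      rw [hF, walk_inter_card _ _ p.support_nodup]
      have := mt (walk_parity (A t) p.walk).1 ht
      rcases Nat.eq_zero_or_pos (p.walk.edges.countP (fun e => e ∈ G.cut (A t))) with h | h
      · rw [h] at this; simp at this
      · exact h
    have a1 := hpos p.first (by
      have := hTA _ p.first_mem
      have h2 := mt (hTA' _ p.last_mem _ p.first_mem) p.ne.symm
      tauto)
    have a2 := hpos p.last (by
      have := hTA _ p.last_mem
      have h2 := mt (hTA' _ p.first_mem _ p.last_mem) p.ne
      tauto)
    have hsub : ({p.first, p.last} : Finset V) ⊆ Tf := by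
      intro t ht
      rw [memTf]
      simp only [Finset.mem_insert, Finset.mem_singleton] at ht
      rcases ht with rfl | rfl
      · exact p.first_mem
      · exact p.last_mem
    have := Finset.sum_le_sum_of_subset (f := fun t => (cutF G (A t) ∩ F p).card) hsub
    rw [Finset.sum_pair p.ne] at this
    omega
  have h2 : 2 * Pf.card ≤ ∑ t ∈ Tf, (cutF G (A t) ∩ EF).card := by
    calc 2 * Pf.card = ∑ p ∈ Pf, 2 := by simp [mul_comm]
      _ ≤ ∑ p ∈ Pf, ∑ t ∈ Tf, (cutF G (A t) ∩ F p).card := Finset.sum_le_sum h1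
      _ = ∑ t ∈ Tf, ∑ p ∈ Pf, (cutF G (A t) ∩ F p).card := Finset.sum_comm
      _ = _ := Finset.sum_congr rfl fun t _ => (hsum _).symm
  have h3 : ∀ K : Set V, G.IsComponentOf K S → Odd (G.cut K).ncard → ∃ e, e ∈ G.cut K ∧ e ∉ EF := by
    intro K hK hodd
    by_contra hcon
    push Not at hcon
    have : cutF G K ∩ EF = cutF G K := Finset.inter_eq_left.2 fun e he => hcon e (mem_cutF.1 he)
    rw [cut_ncard, ← this, hsum] at hodd
    refine Nat.not_even_iff_odd.2 hodd (Finset.even_sum _ fun p _ => ?_)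
    rw [hF, walk_inter_card _ _ p.support_nodup, walk_parity]
    exact iff_of_false (fun h => hTS _ p.first_mem (hK.2.1 h))
      (fun h => hTS _ p.last_mem (hK.2.1 h))
  have h4 : {Y : Set V | G.IsComponentOf Y S ∧ Odd (G.cut Y).ncard}.ncard ≤
      (Tf.biUnion fun t => cutF G (A t) \ EF).card := by
    rcases isEmpty_or_nonempty E with hE | hE
    · have : {Y : Set V | G.IsComponentOf Y S ∧ Odd (G.cut Y).ncard} = ∅ := by
        rw [Set.eq_empty_iff_forall_notMem]
        rintro K ⟨hK, hodd⟩
        obtain ⟨e, -⟩ := h3 K hK hodd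
        exact hE.elim e
      simp [this]
    choose! ε hε1 hε2 using h3
    rw [← Set.ncard_coe_finset]
    refine Set.ncard_le_ncard_of_injOn ε ?_ ?_ (Set.toFinite _)
    · rintro K ⟨hK, hodd⟩
      obtain ⟨x, y, hxy, hx, hy⟩ := comp_cut_ends hK (hε1 K hK hodd)
      have hy' : y ∈ ⋃ t ∈ T, A t := by simpa [hS] using hy
      simp only [Set.mem_iUnion] at hy'
      obtain ⟨t, ht, hyt⟩ := hy'
      simp only [Finset.coe_biUnion, Set.mem_iUnion, Finset.mem_coe]
      refine ⟨t, (memTf t).2 ht, Finset.mem_sdiff.2 ⟨mem_cutF.2 ?_, hε2 K hK hodd⟩⟩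
      rw [cut_iff hxy]
      intro h
      exact hK.2.1 hx (Set.mem_biUnion ht (h.2 hyt))
    · rintro K ⟨hK, hodd⟩ K' ⟨hK', hodd'⟩ he
      exact comp_cut_unique hK hK' (hε1 K hK hodd) (he ▸ hε1 K' hK' hodd')
  have h5 : (Tf.biUnion fun t => cutF G (A t) \ EF).card ≤ ∑ t ∈ Tf, (cutF G (A t) \ EF).card :=
    Finset.card_biUnion_le
  have h6 : ∑ t ∈ Tf, (G.cut (A t)).ncard =
      ∑ t ∈ Tf, (cutF G (A t) ∩ EF).card + ∑ t ∈ Tf, (cutF G (A t) \ EF).card := by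
    rw [← Finset.sum_add_distrib]
    refine Finset.sum_congr rfl fun t _ => ?_
    rw [cut_ncard, Finset.card_inter_add_card_sdiff]
  omega

end
end MaderAux


namespace MaderAux
open Classical Multigraph

section
variable {V E : Type} {G : Multigraph V E}

/-- One step inside `S`. -/
def StepIn (G : Multigraph V E) (S : Set V) (u v : V) : Prop :=
  u ∈ S ∧ v ∈ S ∧ ∃ e, G.inc e = s(u, v)

theorem reach_iff {S : Set V} {x y : V} :
    G.ReachableIn S x y ↔ x ∈ S ∧ Relation.ReflTransGen (StepIn G S) x y := by
  constructor
  · rintro ⟨p, hp⟩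
    induction p with
    | nil v => exact ⟨hp v (by simp [Walk.support]), .refl⟩
    | @cons u v w e he p ih =>
      simp only [Walk.support, List.mem_cons, forall_eq_or_imp] at hp
      have := ih hp.2
      exact ⟨hp.1, this.2.head ⟨hp.1, this.1, e, he⟩⟩
  · rintro ⟨hx, h⟩
    induction h using Relation.ReflTransGen.head_induction_on with
    | refl => exact ⟨Walk.nil y, by simpa [Walk.support] using hx⟩
    | head h _ ih =>
      obtain ⟨h1, h2, e, he⟩ := h
      obtain ⟨p, hp⟩ := ih h2
      exact ⟨Walk.cons e he p, by simpa [Walk.support] using ⟨h1, hp⟩⟩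

theorem step_symm {S : Set V} {x y : V} (h : Relation.ReflTransGen (StepIn G S) x y) :
    Relation.ReflTransGen (StepIn G S) y x := by
  induction h with
  | refl => exact .refl
  | tail _ h2 ih =>
    obtain ⟨h1, h2, e, he⟩ := h2
    exact ih.head ⟨h2, h1, e, by rw [he, Sym2.eq_swap]⟩

def compOf (G : Multigraph V E) (S : Set V) (x : V) : Set V := {y | G.ReachableIn S x y}

theorem compOf_isComp {S : Set V} {x : V} (hx : x ∈ S) : G.IsComponentOf (compOf G S x) S := by
  have hsub : compOf G S x ⊆ S := by
    intro y hy
    have := (reach_iff.1 hy).2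
    cases this with
    | refl => exact hx
    | tail _ h => exact h.2.1
  refine ⟨⟨x, reach_iff.2 ⟨hx, .refl⟩⟩, hsub, ?_⟩
  intro y hy z hz
  have hy' := reach_iff.1 hy
  constructor
  · intro h
    exact reach_iff.2 ⟨hx, hy'.2.trans (reach_iff.1 h).2⟩
  · intro h
    exact reach_iff.2 ⟨hsub hy, (step_symm hy'.2).trans (reach_iff.1 h).2⟩

variable [Fintype V] [Fintype E]

/-- A set with odd cut all of whose boundary leaves `S` contains an odd component of `S`. -/
theorem exists_odd_comp {S X : Set V} (hX : X ⊆ S)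
    (hb : ∀ e x y, G.inc e = s(x, y) → x ∈ X → y ∈ S → y ∈ X) (hodd : Odd (cutF G X).card) :
    ∃ K, G.IsComponentOf K S ∧ Odd (G.cut K).ncard ∧ K ⊆ X := by
  by_contra hcon
  push Not at hcon
  have hsub : ∀ x ∈ X, compOf G S x ⊆ X := by
    intro x hx y hy
    have := (reach_iff.1 hy).2
    clear hy
    induction this with
    | refl => exact hx
    | tail _ h ih =>
      obtain ⟨h1, h2, e, he⟩ := h
      exact hb e _ _ he ih h2
  let Ks : Finset (Set V) := (Finset.univ.filter (· ∈ X)).image (compOf G S)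
  have hKs : ∀ K ∈ Ks, G.IsComponentOf K S ∧ K ⊆ X := by
    intro K hK
    obtain ⟨x, hx, rfl⟩ := Finset.mem_image.1 hK
    simp only [Finset.mem_filter, Finset.mem_univ, true_and] at hx
    exact ⟨compOf_isComp (hX hx), hsub x hx⟩
  have hU : cutF G X = Ks.biUnion (cutF G) := by
    ext e
    simp only [Finset.mem_biUnion, mem_cutF]
    constructor
    · rintro ⟨x, y, he, hx, hy⟩
      have hyS : y ∉ S := fun h => hy (hb e x y he hx h)
      refine ⟨compOf G S x, Finset.mem_image.2 ⟨x, by simpa using hx, rfl⟩, x, y, he, ?_, ?_⟩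
      · exact reach_iff.2 ⟨hX hx, .refl⟩
      · exact fun h => hyS ((compOf_isComp (hX hx)).2.1 h)
    · rintro ⟨K, hK, he⟩
      obtain ⟨x, y, h, hx, hy⟩ := comp_cut_ends (hKs K hK).1 he
      exact ⟨x, y, h, (hKs K hK).2 hx, fun h => hy (hX h)⟩
  rw [hU, Finset.card_biUnion] at hodd
  · refine Nat.not_even_iff_odd.2 hodd (Finset.even_sum _ fun K hK => ?_)
    rw [← cut_ncard, ← Nat.not_odd_iff_even]
    exact fun h => hcon K (hKs K hK).1 h (hKs K hK).2
  · intro K hK K' hK' hne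
    refine Finset.disjoint_left.2 ?_
    intro e he he'
    exact hne (comp_cut_unique (hKs K hK).1 (hKs K' hK').1 (mem_cutF.1 he) (mem_cutF.1 he'))

/-- The places of the auxiliary structure. -/
noncomputable def auxI (G : Multigraph V E) (N : ℕ) : E ⊕ (V × Fin N) → Finset V
  | Sum.inl e => Finset.univ.filter (· ∈ G.inc e)
  | Sum.inr p => {p.1}

noncomputable def auxCol (T : Set V) (N : ℕ) : E ⊕ (V × Fin N) → Option (V ⊕ ℕ)
  | Sum.inl _ => none
  | Sum.inr p => if p.1 ∈ T then some (Sum.inl p.1) else none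

theorem auxI_two (G : Multigraph V E) (N : ℕ) (e : E ⊕ (V × Fin N)) :
    ∀ a ∈ auxI G N e, ∀ b ∈ auxI G N e, ∀ c ∈ auxI G N e, a = b ∨ a = c ∨ b = c := by
  rcases e with e | p
  · simp only [auxI, Finset.mem_filter, Finset.mem_univ, true_and]
    induction h : G.inc e with
    | _ x y =>
      simp only [Sym2.mem_iff]
      rintro a (rfl | rfl) b (rfl | rfl) c (rfl | rfl) <;> simp
  · simp only [auxI, Finset.mem_singleton]
    rintro a rfl b rfl c rfl
    simp

theorem cols_edge {T : Set V} {N : ℕ} {φ : V → (V ⊕ ℕ) ⊕ V} {e : E} {x y : V}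
    (h : G.inc e = s(x, y)) (c : V ⊕ ℕ) :
    c ∈ cols (auxI G N) (auxCol T N) φ (Sum.inl e) ↔ φ x = Sum.inl c ∨ φ y = Sum.inl c := by
  simp [cols, auxI, auxCol, h]

theorem Val_lower_good (T : Set V) (N : ℕ) (φ : V → (V ⊕ ℕ) ⊕ V)
    (hφ : ∀ t ∈ T, φ t = Sum.inl (Sum.inl t)) :
    ∃ A : V → Set V, IsTPartition T A ∧
      (∑ t ∈ (Set.toFinite T).toFinset, (G.cut (A t)).ncard) -
          {Y : Set V | G.IsComponentOf Y (⋃ t ∈ T, A t)ᶜ ∧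
            Odd (G.cut Y).ncard}.ncard ≤ 2 * Val (auxI G N) (auxCol T N) φ := by
  set A : V → Set V := fun t => {v | φ v = Sum.inl (Sum.inl t)} with hA
  refine ⟨A, ⟨?_, ?_⟩, ?_⟩
  · intro t ht
    ext v
    simp only [hA, Set.mem_inter_iff, Set.mem_setOf_eq, Set.mem_singleton_iff]
    constructor
    · rintro ⟨h1, h2⟩
      rw [hφ v h2] at h1
      exact Sum.inl.inj (Sum.inl.inj h1)
    · rintro rfl
      exact ⟨hφ v ht, ht⟩
  · intro t _ t' _ hne
    rw [Set.disjoint_left]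
    intro v hv hv'
    simp only [hA, Set.mem_setOf_eq] at hv hv'
    rw [hv] at hv'
    exact hne (Sum.inl.inj (Sum.inl.inj hv'))
  set S : Set V := (⋃ t ∈ T, A t)ᶜ with hS
  have hSmem : ∀ v, v ∉ S ↔ ∃ t ∈ T, φ v = Sum.inl (Sum.inl t) := by
    intro v; simp [hS, hA]
  set Tf := (Set.toFinite T).toFinset with hTf
  have memTf : ∀ t, t ∈ Tf ↔ t ∈ T := fun t => by simp [hTf]
  set X : V → Set V := fun Y => {v | φ v = Sum.inr Y} with hX
  have hXS : ∀ Y, X Y ⊆ S := by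
    intro Y v hv
    by_contra h
    obtain ⟨t, -, ht⟩ := (hSmem v).1 h
    simp only [hX, Set.mem_setOf_eq] at hv
    rw [hv] at ht
    simp at ht
  let bT : V → Finset E := fun Y => Finset.univ.filter fun e =>
    ∃ x y, G.inc e = s(x, y) ∧ x ∈ X Y ∧ y ∉ S
  let UE : Finset E := Finset.univ.filter fun e => Sum.inl e ∈ UU (auxI G N) (auxCol T N) φ
  have hUE : UE.card ≤ (UU (auxI G N) (auxCol T N) φ).card := by
    refine Finset.card_le_card_of_injOn (fun e => Sum.inl e) ?_ (Sum.inl_injective.injOn)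
    intro e he
    simpa [UE] using he
  have hcut : ∀ Y, (cutF G (X Y)).card ≤ (BB (auxI G N) (auxCol T N) φ Y).card := by
    intro Y
    refine Finset.card_le_card_of_injOn (fun e => Sum.inl e) ?_ (Sum.inl_injective.injOn)
    intro e he
    obtain ⟨x, y, hxy, hx, hy⟩ := mem_cutF.1 he
    simp only [hX, Set.mem_setOf_eq] at hx hy
    rw [Finset.mem_coe, mem_BB, mem_UU]
    refine ⟨?_, ⟨x, by simp [auxI, hxy], hx⟩, ?_⟩
    · rintro ⟨c, d, hcd, hc, hd⟩
      rw [cols_edge hxy, hx] at hc hd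
      simp only [reduceCtorEq, false_or] at hc hd
      rw [hc] at hd
      exact hcd (Sum.inl.inj hd)
    · rcases hy' : φ y with c | Z
      · exact Or.inl ⟨c, (cols_edge hxy c).2 (Or.inr hy')⟩
      · refine Or.inr ⟨y, by simp [auxI, hxy], Z, ?_, hy'⟩
        rintro rfl
        exact hy hy'
  have hbT : ∀ Y, bT Y ⊆ cutF G (X Y) := by
    intro Y e he
    simp only [bT, Finset.mem_filter, Finset.mem_univ, true_and] at he
    obtain ⟨x, y, hxy, hx, hy⟩ := he
    exact mem_cutF.2 ⟨x, y, hxy, hx, fun h => hy (hXS Y h)⟩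
  -- the exceptional classes
  let Ex : Finset V := Finset.univ.filter fun Y => bT Y = cutF G (X Y) ∧ Odd (cutF G (X Y)).card
  have hEx : Ex.card ≤ {Y : Set V | G.IsComponentOf Y S ∧ Odd (G.cut Y).ncard}.ncard := by
    have : ∀ Y ∈ Ex, ∃ K, G.IsComponentOf K S ∧ Odd (G.cut K).ncard ∧ K ⊆ X Y := by
      intro Y hY
      simp only [Ex, Finset.mem_filter, Finset.mem_univ, true_and] at hY
      refine exists_odd_comp (hXS Y) ?_ hY.2
      intro e x y he hx hy
      by_contra hyX
      have : e ∈ bT Y := by rw [hY.1]; exact mem_cutF.2 ⟨x, y, he, hx, hyX⟩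
      simp only [bT, Finset.mem_filter, Finset.mem_univ, true_and] at this
      obtain ⟨x', y', he', hx', hy'⟩ := this
      rw [he, Sym2.eq_iff] at he'
      rcases he' with ⟨rfl, rfl⟩ | ⟨rfl, rfl⟩
      · exact hy' hy
      · exact hyX hx'
    choose! κ h1 h2 h3 using this
    rw [← Set.ncard_coe_finset]
    refine Set.ncard_le_ncard_of_injOn κ ?_ ?_ (Set.toFinite _)
    · intro Y hY
      exact ⟨h1 Y hY, h2 Y hY⟩
    · intro Y hY Z hZ h
      obtain ⟨x, hx⟩ := (h1 Y hY).1
      have a1 := h3 Y hY hx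
      have a2 := h3 Z hZ (h ▸ hx)
      simp only [hX, Set.mem_setOf_eq] at a1 a2
      rw [a1] at a2
      exact Sum.inr.inj a2
  have hY : ∀ Y, (bT Y).card ≤ 2 * ((BB (auxI G N) (auxCol T N) φ Y).card / 2) +
      (if Y ∈ Ex then 1 else 0) := by
    intro Y
    have e1 := hcut Y
    have e2 := Finset.card_le_card (hbT Y)
    split_ifs with h
    · omega
    · simp only [Ex, Finset.mem_filter, Finset.mem_univ, true_and, not_and] at h
      by_cases hb : bT Y = cutF G (X Y)
      · have := h hb
        rw [Nat.odd_iff] at this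
        omega
      · have := Finset.card_lt_card (lt_of_le_of_ne (hbT Y) hb)
        omega
  have hsumY : ∑ Y, (bT Y).card ≤
      2 * ∑ Y, ((BB (auxI G N) (auxCol T N) φ Y).card / 2) + Ex.card := by
    refine (Finset.sum_le_sum fun Y _ => hY Y).trans ?_
    rw [Finset.sum_add_distrib, ← Finset.mul_sum]
    simp
  -- the double counting
  have hpt : ∀ e, (Tf.filter fun t => e ∈ cutF G (A t)).card ≤
      2 * (if e ∈ UE then 1 else 0) + (Finset.univ.filter fun Y => e ∈ bT Y).card := by
    intro e
    obtain ⟨x, y, hxy⟩ : ∃ x y, G.inc e = s(x, y) := by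
      induction h : G.inc e with
      | _ x y => exact ⟨x, y, rfl⟩
    have hmem : ∀ t, e ∈ cutF G (A t) ↔
        ¬ (φ x = Sum.inl (Sum.inl t) ↔ φ y = Sum.inl (Sum.inl t)) := by
      intro t
      rw [mem_cutF, cut_iff hxy]
      rfl
    have one : ∀ z : V, (Tf.filter fun t => φ z = Sum.inl (Sum.inl t)).card ≤ 1 := by
      intro z
      rw [Finset.card_le_one]
      intro a ha b hb
      simp only [Finset.mem_filter] at ha hb
      have := ha.2.symm.trans hb.2
      exact Sum.inl.inj (Sum.inl.inj this)
    have mixed : ∀ x y c Y, G.inc e = s(x, y) → φ x = Sum.inl c → φ y = Sum.inr Y →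
        (Tf.filter fun t => φ x = Sum.inl (Sum.inl t)).card ≤
          (Finset.univ.filter fun Y => e ∈ bT Y).card := by
      intro x y c Y hxy hx hy
      rcases Finset.eq_empty_or_nonempty (Tf.filter fun t => φ x = Sum.inl (Sum.inl t)) with h | ⟨t, ht⟩
      · rw [h]; simp
      · refine (one x).trans (Finset.card_pos.2 ⟨Y, ?_⟩)
        simp only [Finset.mem_filter] at ht
        simp only [bT, Finset.mem_filter, Finset.mem_univ, true_and]
        exact ⟨y, x, by rw [hxy, Sym2.eq_swap], hy, (hSmem x).2 ⟨t, (memTf t).1 ht.1, ht.2⟩⟩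
    rcases hx : φ x with c | Y <;> rcases hy : φ y with d | Z
    · by_cases hcd : c = d
      · have : (Tf.filter fun t => e ∈ cutF G (A t)) = ∅ := by
          rw [Finset.filter_eq_empty_iff]
          intro t _
          rw [hmem, hx, hy, hcd]
          simp
        rw [this]; simp
      · have hU : e ∈ UE := by
          simp only [UE, Finset.mem_filter, Finset.mem_univ, true_and, mem_UU]
          exact ⟨c, d, hcd, (cols_edge hxy c).2 (Or.inl hx), (cols_edge hxy d).2 (Or.inr hy)⟩
        have hs : (Tf.filter fun t => e ∈ cutF G (A t)) ⊆
            (Tf.filter fun t => φ x = Sum.inl (Sum.inl t)) ∪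
            (Tf.filter fun t => φ y = Sum.inl (Sum.inl t)) := by
          intro t ht
          simp only [Finset.mem_union, Finset.mem_filter] at ht ⊢
          rw [hmem] at ht
          tauto
        have h1 := (Finset.card_le_card hs).trans (Finset.card_union_le _ _)
        have h2 := one x
        have h3 := one y
        rw [if_pos hU]
        omega
    · have h1 := mixed x y c Z hxy hx hy
      have hs : (Tf.filter fun t => e ∈ cutF G (A t)) ⊆
          (Tf.filter fun t => φ x = Sum.inl (Sum.inl t)) := by
        intro t ht
        simp only [Finset.mem_filter] at ht ⊢
        rw [hmem, hy] at ht
        simp only [reduceCtorEq, iff_false, not_not] at ht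
        exact ht
      have h2 := Finset.card_le_card hs
      omega
    · have h1 := mixed y x d Y (by rw [hxy, Sym2.eq_swap]) hy hx
      have hs : (Tf.filter fun t => e ∈ cutF G (A t)) ⊆
          (Tf.filter fun t => φ y = Sum.inl (Sum.inl t)) := by
        intro t ht
        simp only [Finset.mem_filter] at ht ⊢
        rw [hmem, hx] at ht
        simp only [reduceCtorEq, false_iff, not_not] at ht
        exact ht
      have h2 := Finset.card_le_card hs
      omega
    · have : (Tf.filter fun t => e ∈ cutF G (A t)) = ∅ := by
        rw [Finset.filter_eq_empty_iff]
        intro t _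
        rw [hmem, hx, hy]
        simp
      rw [this]; simp
  have hdc : ∀ {D : Type} (R : Finset D) (f : D → Finset E), ∑ t ∈ R, (f t).card =
      ∑ e, (R.filter fun t => e ∈ f t).card := by
    intro D R f
    simp only [Finset.card_filter]
    rw [Finset.sum_comm]
    refine Finset.sum_congr rfl fun t _ => ?_
    rw [Finset.card_eq_sum_ones, ← Finset.sum_filter]
    congr 1
    ext e; simp
  have htot : ∑ t ∈ Tf, (G.cut (A t)).ncard ≤ 2 * UE.card + ∑ Y, (bT Y).card := by
    have : ∑ t ∈ Tf, (G.cut (A t)).ncard = ∑ t ∈ Tf, (cutF G (A t)).card :=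
      Finset.sum_congr rfl fun t _ => cut_ncard _
    rw [this, hdc Tf (fun t => cutF G (A t)), hdc Finset.univ bT]
    refine (Finset.sum_le_sum fun e _ => hpt e).trans ?_
    rw [Finset.sum_add_distrib, ← Finset.mul_sum]
    simp
  rw [Val]
  omega

theorem Val_lower (T : Set V) (m : ℕ) (φ : V → (V ⊕ ℕ) ⊕ V)
    (hm : ∀ A : V → Set V, IsTPartition T A →
      m ≤ (∑ t ∈ (Set.toFinite T).toFinset, (G.cut (A t)).ncard) -
          {Y : Set V | G.IsComponentOf Y (⋃ t ∈ T, A t)ᶜ ∧ Odd (G.cut Y).ncard}.ncard) :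
    (m + 1) / 2 ≤ Val (auxI G (2 * m + 2)) (auxCol T (2 * m + 2)) φ := by
  by_cases hφ : ∀ t ∈ T, φ t = Sum.inl (Sum.inl t)
  · obtain ⟨A, hA, h⟩ := Val_lower_good (G := G) T (2 * m + 2) φ hφ
    have := hm A hA
    omega
  push Not at hφ
  obtain ⟨t, ht, hne⟩ := hφ
  have hcol : ∀ i c, c ∈ cols (auxI G (2 * m + 2)) (auxCol T (2 * m + 2)) φ (Sum.inr (t, i)) ↔
      c = Sum.inl t ∨ φ t = Sum.inl c := by
    intro i c
    simp only [cols, auxI, auxCol, ht, if_true, Set.mem_setOf_eq, Option.some.injEq,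
      Finset.mem_singleton, exists_eq_left]
    rw [eq_comm]
  have hcard : ∀ X : Finset (E ⊕ (V × Fin (2 * m + 2))), (∀ i, Sum.inr (t, i) ∈ X) →
      2 * m + 2 ≤ X.card := by
    intro X hX
    have := Finset.card_le_card_of_injOn (s := (Finset.univ : Finset (Fin (2 * m + 2)))) (t := X)
      (fun i => Sum.inr (t, i)) (fun i _ => hX i) (by
        intro i _ j _ h
        simpa using h)
    simpa using this
  rcases hφt : φ t with c | Y
  · have := hcard (UU (auxI G (2 * m + 2)) (auxCol T (2 * m + 2)) φ) (by
      intro i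
      rw [mem_UU]
      refine ⟨c, Sum.inl t, ?_, (hcol i c).2 (Or.inr hφt), (hcol i _).2 (Or.inl rfl)⟩
      rintro rfl
      exact hne hφt)
    rw [Val]
    omega
  · have := hcard (BB (auxI G (2 * m + 2)) (auxCol T (2 * m + 2)) φ Y) (by
      intro i
      rw [mem_BB, mem_UU]
      refine ⟨?_, ⟨t, by simp [auxI], hφt⟩, Or.inl ⟨Sum.inl t, (hcol i _).2 (Or.inl rfl)⟩⟩
      rintro ⟨c, d, hcd, hc, hd⟩
      rw [hcol, hφt] at hc hd
      simp only [reduceCtorEq, or_false] at hc hd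
      exact hcd (hc.trans hd.symm))
    have h2 := Finset.single_le_sum (f := fun Y =>
      (BB (auxI G (2 * m + 2)) (auxCol T (2 * m + 2)) φ Y).card / 2) (fun _ _ => Nat.zero_le _)
      (Finset.mem_univ Y)
    rw [Val]
    omega

end
end MaderAux


namespace MaderAux
open Classical Multigraph

section
variable {V E : Type} {G : Multigraph V E}

theorem walk_suffix {u w : V} (p : G.Walk u w) {x : V} (hx : x ∈ p.support) :
    ∃ q : G.Walk x w, q.support <:+ p.support ∧ (∀ e ∈ q.edges, e ∈ p.edges) ∧
      (x ≠ u → q.support.length < p.support.length) := by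
  induction p with
  | nil v =>
    simp only [Walk.support, List.mem_singleton] at hx
    subst hx
    exact ⟨Walk.nil _, List.suffix_rfl, fun _ h => h, fun h => (h rfl).elim⟩
  | @cons u v w e he p ih =>
    by_cases hxu : x = u
    · subst hxu
      exact ⟨Walk.cons e he p, List.suffix_rfl, fun _ h => h, fun h => (h rfl).elim⟩
    · simp only [Walk.support, List.mem_cons, hxu, false_or] at hx
      obtain ⟨q, h1, h2, -⟩ := ih hx
      refine ⟨q, h1.trans (List.suffix_cons _ _), fun f hf => ?_, fun _ => ?_⟩
      · simp only [Walk.edges, List.mem_cons]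
        exact Or.inr (h2 f hf)
      · have := h1.length_le
        simp only [Walk.support, List.length_cons]
        omega

theorem walk_bypass {u w : V} (p : G.Walk u w) :
    ∃ q : G.Walk u w, q.support.Nodup ∧ ∀ e ∈ q.edges, e ∈ p.edges := by
  induction p with
  | nil v => exact ⟨Walk.nil v, by simp [Walk.support], fun _ h => h⟩
  | @cons u v w e he p ih =>
    obtain ⟨q, h1, h2⟩ := ih
    by_cases hu : u ∈ q.support
    · obtain ⟨r, h3, h4, -⟩ := walk_suffix q hu
      refine ⟨r, h1.sublist h3.sublist, fun f hf => ?_⟩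
      simp only [Walk.edges, List.mem_cons]
      exact Or.inr (h2 f (h4 f hf))
    · refine ⟨Walk.cons e he q, by simpa [Walk.support] using ⟨hu, h1⟩, fun f hf => ?_⟩
      simp only [Walk.edges, List.mem_cons] at hf ⊢
      exact hf.imp id (h2 f)

theorem exists_TPath_nodup {T : Set V} (n : ℕ) : ∀ {u w : V} (p : G.Walk u w),
    p.support.length = n → p.support.Nodup → u ∈ T → w ∈ T → u ≠ w →
    ∃ q : G.TPath T, ∀ e ∈ q.walk.edges, e ∈ p.edges := by
  induction n using Nat.strong_induction_on with
  | _ n ih =>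
  rintro u w p rfl hn hu hw hne
  by_cases h : ∀ x ∈ p.support, x ∈ T → x = u ∨ x = w
  · exact ⟨⟨u, w, p, hu, hw, hne, hn, h⟩, fun _ h => h⟩
  · push Not at h
    obtain ⟨x, hx, hxT, hxu, hxw⟩ := h
    obtain ⟨q, h1, h2, h3⟩ := walk_suffix p hx
    obtain ⟨r, hr⟩ := ih _ (h3 hxu) q rfl (hn.sublist h1.sublist) hxT hw hxw
    exact ⟨r, fun e he => h2 e (hr e he)⟩

theorem exists_TPath {T : Set V} {u w : V} (p : G.Walk u w) (hu : u ∈ T) (hw : w ∈ T)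
    (hne : u ≠ w) : ∃ q : G.TPath T, ∀ e ∈ q.walk.edges, e ∈ p.edges := by
  obtain ⟨q, h1, h2⟩ := walk_bypass p
  obtain ⟨r, hr⟩ := exists_TPath_nodup _ q rfl h1 hu hw hne
  exact ⟨r, fun e he => h2 e (hr e he)⟩

variable [Fintype V] [Fintype E]

theorem aux_step {N : ℕ} {x : E ⊕ (V × Fin N)} {v z w : V} (hv : v ∈ auxI G N x)
    (hz : z ∈ auxI G N x) (p : G.Walk z w) :
    ∃ q : G.Walk v w, ∀ e ∈ q.edges, Sum.inl e = x ∨ e ∈ p.edges := by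
  by_cases hvz : v = z
  · subst hvz
    exact ⟨p, fun e he => Or.inr he⟩
  rcases x with f | y
  · simp only [auxI, Finset.mem_filter, Finset.mem_univ, true_and] at hv hz
    have hf : G.inc f = s(v, z) := (Sym2.mem_and_mem_iff hvz).1 ⟨hv, hz⟩
    refine ⟨Walk.cons f hf p, fun e he => ?_⟩
    simp only [Walk.edges, List.mem_cons] at he
    exact he.imp (fun h => by rw [h]) id
  · simp only [auxI, Finset.mem_singleton] at hv hz
    exact (hvz (hv.trans hz.symm)).elim

theorem walk_of_chain {N : ℕ} : ∀ (l : List (E ⊕ (V × Fin N))) (a b : E ⊕ (V × Fin N)) (v w : V),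
    l.IsChain (adjI (auxI G N)) → l.head? = some a → l.getLast? = some b →
    v ∈ auxI G N a → w ∈ auxI G N b → ∃ p : G.Walk v w, ∀ e ∈ p.edges, Sum.inl e ∈ l := by
  intro l
  induction l with
  | nil => intro a b v w _ h; simp at h
  | cons x l ih =>
    intro a b v w hc ha hb hv hw
    simp only [List.head?_cons, Option.some.injEq] at ha
    subst ha
    rcases l with _ | ⟨y, l⟩
    · simp only [List.getLast?_singleton, Option.some.injEq] at hb
      subst hb
      obtain ⟨q, hq⟩ := aux_step hv hw (Walk.nil w)
      refine ⟨q, fun e he => ?_⟩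
      rcases hq e he with h | h
      · simp [h]
      · simp [Walk.edges] at h
    · rw [List.isChain_cons_cons] at hc
      obtain ⟨⟨z, hz, hz'⟩, hc'⟩ := hc
      obtain ⟨p, hp⟩ := ih y b z w hc' rfl (by simpa [List.getLast?_cons_cons] using hb) hz' hw
      obtain ⟨q, hq⟩ := aux_step hv hz p
      refine ⟨q, fun e he => ?_⟩
      rcases hq e he with h | h
      · simp [h]
      · exact List.mem_cons_of_mem _ (hp e h)

theorem paths_of_pack {T : Set V} {N k : ℕ} (h : Pack (adjI (auxI G N)) (auxCol (E := E) T N) k) :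
    ∃ P : Set (G.TPath T), G.TPathDisjoint P ∧ P.ncard = k := by
  obtain ⟨Q, a, b, hQ⟩ := h
  have hc : ∀ x, auxCol (E := E) T N x ≠ none → ∃ p : V × Fin N, x = Sum.inr p ∧ p.1 ∈ T ∧
      auxCol (E := E) T N x = some (Sum.inl p.1) := by
    rintro (e | p) hx
    · simp [auxCol] at hx
    · by_cases hp : p.1 ∈ T
      · exact ⟨p, rfl, hp, by simp [auxCol, hp]⟩
      · simp [auxCol, hp] at hx
  have : ∀ i, ∃ q : G.TPath T, ∀ e ∈ q.walk.edges, Sum.inl e ∈ Q i := by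
    intro i
    have hi := hQ.isP i
    obtain ⟨p, hp1, hp2, hp3⟩ := hc _ hi.ca
    obtain ⟨q, hq1, hq2, hq3⟩ := hc _ hi.cb
    have hne : p.1 ≠ q.1 := by
      intro h
      apply hi.ne
      rw [hp3, hq3, h]
    obtain ⟨r, hr⟩ := walk_of_chain (G := G) (Q i) (a i) (b i) p.1 q.1 hi.chain hi.head hi.last
      (by rw [hp1]; simp [auxI]) (by rw [hq1]; simp [auxI])
    obtain ⟨s, hs⟩ := exists_TPath r hp2 hq2 hne
    exact ⟨s, fun e he => hr e (hs e he)⟩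
  choose τ hτ using this
  have hinj : Function.Injective τ := by
    intro i j hij
    by_contra hne
    obtain ⟨e, he⟩ := List.exists_mem_of_ne_nil _ (edges_ne_nil (τ i).walk (τ i).ne)
    exact hQ.disj i j hne _ (hτ i e he) (hτ j e (hij ▸ he))
  refine ⟨Set.range τ, ?_, ?_⟩
  · rintro _ ⟨i, rfl⟩ _ ⟨j, rfl⟩ hne e he he'
    have hij : i ≠ j := by rintro rfl; exact hne rfl
    exact hQ.disj i j hij _ (hτ i e he) (hτ j e he')
  · rw [← Set.image_univ, Set.ncard_image_of_injective _ hinj, Set.ncard_univ]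
    simp

end
end MaderAux

theorem mader_edge_disjoint {V E : Type} [Fintype V] [Fintype E]
    (G : Multigraph V E) (T : Set V) :
    2 * sSup {n : ℕ | ∃ P : Set (G.TPath T), G.TPathDisjoint P ∧ P.ncard = n} =
      sInf {k : ℕ | ∃ A : V → Set V, Multigraph.IsTPartition T A ∧
        k = (∑ t ∈ (Set.toFinite T).toFinset, (G.cut (A t)).ncard) -
          {Y : Set V | G.IsComponentOf Y (⋃ t ∈ T, A t)ᶜ ∧
            Odd (G.cut Y).ncard}.ncard} := by
  set S1 := {n : ℕ | ∃ P : Set (G.TPath T), G.TPathDisjoint P ∧ P.ncard = n} with hS1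
  set S2 := {k : ℕ | ∃ A : V → Set V, Multigraph.IsTPartition T A ∧
        k = (∑ t ∈ (Set.toFinite T).toFinset, (G.cut (A t)).ncard) -
          {Y : Set V | G.IsComponentOf Y (⋃ t ∈ T, A t)ᶜ ∧
            Odd (G.cut Y).ncard}.ncard} with hS2
  have hne2 : S2.Nonempty := by
    refine ⟨_, fun t => {t}, ⟨?_, ?_⟩, rfl⟩
    · intro t ht
      ext v
      simp only [Set.mem_inter_iff, Set.mem_singleton_iff]
      constructor
      · exact fun h => h.1
      · rintro rfl
        exact ⟨rfl, ht⟩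
    · intro t _ t' _ hne
      simpa using hne
  have hweak : ∀ n ∈ S1, 2 * n ≤ sInf S2 := by
    rintro n ⟨P, hP, rfl⟩
    obtain ⟨A, hA, h⟩ := Nat.sInf_mem hne2
    have := MaderAux.weak_duality P hP A hA
    rw [h]
    omega
  have hbdd : BddAbove S1 := ⟨sInf S2, fun n hn => by have := hweak n hn; omega⟩
  have hk : (sInf S2 + 1) / 2 ∈ S1 := by
    refine MaderAux.paths_of_pack (N := 2 * sInf S2 + 2) ?_
    refine MaderAux.main_ind _ _ _ _ (MaderAux.auxI_two G _) rfl ?_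
    intro φ
    refine MaderAux.Val_lower T (sInf S2) φ ?_
    intro A hA
    exact Nat.sInf_le ⟨A, hA, rfl⟩
  have h1 := le_csSup hbdd hk
  have h2 := hweak _ (Nat.sSup_mem ⟨_, hk⟩ hbdd)
  omega
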